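/- arXiv:1601.01452 — 4 statements merged into one kernel-verified Lean document; each statement's English description precedes it below -/
import Mathlib

section
/- Let (X_i)_{i≥1} be a sequence of real numbers. The series ∑_{i=1}^∞ X_i converges if and only if there exists a nonnegative, nonincreasing sequence (c_j)_{j≥1} with c_j → 0 such that for every sequence (n_j)_{j≥1} of positive integers, the recursive posterior mean E_k (formed from the block sums S_j determined by (n_j) and the indicators y_j = 1{|S_j| ≤ c_j}) tends to 1 as k → ∞. -/
open Filter

/-- Block sum `S_j = ∑_{i = N_{j-1}+1}^{N_j} X_i` where `N_j = n_1 + ⋯ + n_j`. -/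
noncomputable def blockSum (X : ℕ → ℝ) (n : ℕ → ℕ) (j : ℕ) : ℝ :=
  ∑ i ∈ Finset.Icc ((∑ l ∈ Finset.Icc 1 (j - 1), n l) + 1) (∑ l ∈ Finset.Icc 1 j, n l), X i

/-- Recursive Bayesian posterior mean at stage `k`:
`E_k = (∑_{j=1}^k j⁻² + ∑_{j=1}^k y_j) / (k + 2 ∑_{j=1}^k j⁻²)`. -/
noncomputable def postMean (y : ℕ → ℝ) (k : ℕ) : ℝ :=
  ((∑ j ∈ Finset.Icc 1 k, ((j : ℝ) ^ 2)⁻¹) + ∑ j ∈ Finset.Icc 1 k, y j) /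
    ((k : ℝ) + 2 * ∑ j ∈ Finset.Icc 1 k, ((j : ℝ) ^ 2)⁻¹)

/-!
The prior weights `j⁻²` have Cesàro means tending to `0`, so the posterior mean is a perturbed
Cesàro mean and inherits every limit of the indicators `y_j`. If the partial sums are Cauchy, the
diameters of their tails are thresholds that no block exceeds, so `y_j = 1` throughout. If they are
not Cauchy, some choice of blocks has all its sums of norm at least a fixed `ε`, which exceeds `c_j`
for large `j`; then `y_j = 0` eventually and the posterior mean tends to `0`.
-/

open Topology

section PosteriorMean

lemma sum_Icc_one_eq_sum_range {M : Type*} [AddCommMonoid M] (f : ℕ → M) (k : ℕ) :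
    ∑ j ∈ Finset.Icc 1 k, f j = ∑ i ∈ Finset.range k, f (i + 1) := by
  rw [Finset.range_eq_Ico, Finset.sum_Ico_add' f 0 k 1, zero_add, Finset.Ico_add_one_right_eq_Icc]

lemma tendsto_inv_smul_sum_Icc {E : Type*} [NormedAddCommGroup E] [NormedSpace ℝ E]
    {u : ℕ → E} {l : E} (hu : Tendsto u atTop (𝓝 l)) :
    Tendsto (fun k : ℕ => (k⁻¹ : ℝ) • ∑ j ∈ Finset.Icc 1 k, u j) atTop (𝓝 l) := by
  simpa only [sum_Icc_one_eq_sum_range, Function.comp_def] using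
    (hu.comp (tendsto_add_atTop_nat 1)).cesaro_smul

lemma tendsto_postMean {y : ℕ → ℝ} {l : ℝ} (hy : Tendsto y atTop (𝓝 l)) :
    Tendsto (postMean y) atTop (𝓝 l) := by
  have weight_tendsto : Tendsto (fun j : ℕ => ((j : ℝ) ^ 2)⁻¹) atTop (𝓝 0) :=
    ((tendsto_pow_atTop two_ne_zero).comp tendsto_natCast_atTop_atTop).inv_tendsto_atTop
  have weight_average := tendsto_inv_smul_sum_Icc weight_tendsto
  have quotient_tendsto := (weight_average.add (tendsto_inv_smul_sum_Icc hy)).div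
    ((weight_average.const_mul 2).const_add 1) (by norm_num)
  rw [mul_zero, add_zero, zero_add, div_one] at quotient_tendsto
  refine quotient_tendsto.congr' ?_
  filter_upwards [eventually_ne_atTop 0] with k hk
  have hk' : (k : ℝ) ≠ 0 := Nat.cast_ne_zero.2 hk
  have denominator_eq (A : ℝ) : 1 + 2 * ((k : ℝ)⁻¹ * A) = (k : ℝ)⁻¹ * (k + 2 * A) := by
    rw [mul_add, inv_mul_cancel₀ hk', mul_left_comm]
  simp only [Pi.div_apply, postMean, smul_eq_mul]
  rw [← mul_add, denominator_eq, mul_div_mul_left _ _ (inv_ne_zero hk')]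

end PosteriorMean

section CauchySequences

variable {α : Type*} [PseudoMetricSpace α] {u : ℕ → α}

lemma exists_antitone_dist_le_of_cauchySeq (hu : CauchySeq u) :
    ∃ b : ℕ → ℝ, (∀ N, 0 ≤ b N) ∧ Antitone b ∧ Tendsto b atTop (𝓝 0) ∧
      ∀ N p q, N ≤ p → N ≤ q → dist (u p) (u q) ≤ b N := by
  have tail_bounded (N : ℕ) : Bornology.IsBounded (u '' Set.Ici N) :=
    hu.isBounded_range.subset (Set.image_subset_range _ _)
  obtain ⟨d, d_nonneg, dist_le, d_tendsto⟩ := cauchySeq_iff_le_tendsto_0.1 hu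
  have diam_le (N : ℕ) : Metric.diam (u '' Set.Ici N) ≤ d N := by
    refine Metric.diam_le_of_forall_dist_le (d_nonneg N) ?_
    rintro _ ⟨p, hp, rfl⟩ _ ⟨q, hq, rfl⟩
    exact dist_le p q N hp hq
  refine ⟨fun N => Metric.diam (u '' Set.Ici N), fun _ => Metric.diam_nonneg, ?_,
    squeeze_zero (fun _ => Metric.diam_nonneg) diam_le d_tendsto, ?_⟩
  · exact fun M N hMN => Metric.diam_mono (Set.image_mono (Set.Ici_subset_Ici.2 hMN))
      (tail_bounded M)
  · exact fun N p q hp hq => Metric.dist_le_diam_of_mem (tail_bounded N)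
      (Set.mem_image_of_mem u hp) (Set.mem_image_of_mem u hq)

lemma exists_strictMono_le_dist_of_not_cauchySeq (hu : ¬ CauchySeq u) :
    ∃ ε > 0, ∃ φ : ℕ → ℕ, StrictMono φ ∧ φ 0 = 0 ∧
      ∀ j, ε ≤ dist (u (φ (j + 1))) (u (φ j)) := by
  rw [Metric.cauchySeq_iff'] at hu
  push Not at hu
  obtain ⟨ε, ε_pos, far⟩ := hu
  choose next le_next le_dist_next using far
  have lt_next (N : ℕ) : N < next N := by
    refine (le_next N).lt_of_ne fun h => ?_
    have := le_dist_next N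
    rw [← h, dist_self] at this
    exact this.not_gt ε_pos
  refine ⟨ε, ε_pos, fun j => next^[j] 0, strictMono_nat_of_lt_succ fun j => ?_, rfl, fun j => ?_⟩
  · simpa only [Function.iterate_succ_apply'] using lt_next _
  · simpa only [Function.iterate_succ_apply'] using le_dist_next _

end CauchySequences

section Blocks

/-- The last index `N_j = n_1 + ⋯ + n_j` of the `j`-th block, with `N_0 = 0`. Block lengths are
indexed from `1`, so `n 0` is ignored. -/
def blockEnd (n : ℕ → ℕ) (j : ℕ) : ℕ :=
  ∑ l ∈ Finset.Icc 1 j, n l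

lemma blockEnd_succ (n : ℕ → ℕ) (j : ℕ) : blockEnd n (j + 1) = blockEnd n j + n (j + 1) :=
  Finset.sum_Icc_succ_top (Nat.le_add_left 1 j) n

lemma blockEnd_mono (n : ℕ → ℕ) : Monotone (blockEnd n) :=
  monotone_nat_of_le_succ fun j => blockEnd_succ n j ▸ Nat.le_add_right _ _

lemma blockEnd_strictMono {n : ℕ → ℕ} (hn : ∀ j, 0 < n j) : StrictMono (blockEnd n) :=
  strictMono_nat_of_lt_succ fun j => blockEnd_succ n j ▸ Nat.lt_add_of_pos_right (hn (j + 1))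

lemma exists_blockEnd_eq {φ : ℕ → ℕ} (hφ : StrictMono φ) (h0 : φ 0 = 0) :
    ∃ n : ℕ → ℕ, (∀ j, 0 < n j) ∧ blockEnd n = φ := by
  -- `φ (j - 1 + 1)` rather than `φ j`, so that the length is positive at `j = 0` as well.
  refine ⟨fun j => φ (j - 1 + 1) - φ (j - 1),
    fun j => Nat.sub_pos_of_lt (hφ (Nat.lt_succ_self _)), funext fun j => ?_⟩
  simp only [blockEnd, sum_Icc_one_eq_sum_range, Nat.add_sub_cancel]
  rw [Finset.sum_range_tsub hφ.monotone, h0, Nat.sub_zero]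

/-- The block sum `S_j` of a sequence in an arbitrary commutative monoid, extending
`blockSum` beyond real sequences. -/
def vectorBlockSum {E : Type*} [AddCommMonoid E] (X : ℕ → E) (n : ℕ → ℕ) (j : ℕ) : E :=
  ∑ i ∈ Finset.Icc (blockEnd n (j - 1) + 1) (blockEnd n j), X i

lemma vectorBlockSum_eq_sub {E : Type*} [AddCommGroup E] (X : ℕ → E) (n : ℕ → ℕ) (j : ℕ) :
    vectorBlockSum X n j =
      ∑ i ∈ Finset.Icc 1 (blockEnd n j), X i - ∑ i ∈ Finset.Icc 1 (blockEnd n (j - 1)), X i := by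
  have split := Finset.sum_Ioc_consecutive X (Nat.zero_le (blockEnd n (j - 1)))
    (blockEnd_mono n (Nat.sub_le j 1))
  simp only [← Finset.Icc_add_one_left_eq_Ioc, zero_add] at split
  exact eq_sub_of_add_eq' split

variable {E : Type*} [SeminormedAddCommGroup E] {X : ℕ → E}

lemma exists_antitone_norm_vectorBlockSum_le
    (hX : CauchySeq fun N : ℕ => ∑ i ∈ Finset.Icc 1 N, X i) :
    ∃ c : ℕ → ℝ, (∀ j, 0 ≤ c j) ∧ Antitone c ∧ Tendsto c atTop (𝓝 0) ∧
      ∀ n : ℕ → ℕ, (∀ j, 0 < n j) → ∀ j, ‖vectorBlockSum X n j‖ ≤ c j := by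
  obtain ⟨b, b_nonneg, b_antitone, b_tendsto, dist_le⟩ := exists_antitone_dist_le_of_cauchySeq hX
  refine ⟨fun j => b (j - 1), fun j => b_nonneg _,
    fun i j hij => b_antitone (Nat.sub_le_sub_right hij 1),
    b_tendsto.comp (tendsto_sub_atTop_nat 1), fun n hn j => ?_⟩
  have sub_one_le : j - 1 ≤ blockEnd n (j - 1) := (blockEnd_strictMono hn).le_apply
  rw [vectorBlockSum_eq_sub, ← dist_eq_norm]
  exact dist_le _ _ _ (sub_one_le.trans (blockEnd_mono n (Nat.sub_le j 1))) sub_one_le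

lemma exists_le_norm_vectorBlockSum
    (hX : ¬ CauchySeq fun N : ℕ => ∑ i ∈ Finset.Icc 1 N, X i) :
    ∃ ε > 0, ∃ n : ℕ → ℕ, (∀ j, 0 < n j) ∧ ∀ j, 1 ≤ j → ε ≤ ‖vectorBlockSum X n j‖ := by
  obtain ⟨ε, ε_pos, φ, φ_strictMono, φ_zero, le_dist⟩ :=
    exists_strictMono_le_dist_of_not_cauchySeq hX
  obtain ⟨n, n_pos, rfl⟩ := exists_blockEnd_eq φ_strictMono φ_zero
  refine ⟨ε, ε_pos, n, n_pos, fun j hj => ?_⟩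
  rw [vectorBlockSum_eq_sub, ← dist_eq_norm]
  simpa only [Nat.sub_add_cancel hj] using le_dist (j - 1)

end Blocks

theorem convergence_iff_posterior_mean_tendsto_one_general {E : Type*} [SeminormedAddCommGroup E]
    (X : ℕ → E) :
    CauchySeq (fun N : ℕ => ∑ i ∈ Finset.Icc 1 N, X i) ↔
    (∃ c : ℕ → ℝ, (∀ j, 0 ≤ c j) ∧ Antitone c ∧ Tendsto c atTop (𝓝 0) ∧
      ∀ n : ℕ → ℕ, (∀ j, 0 < n j) →
        Tendsto (postMean (fun j => if ‖vectorBlockSum X n j‖ ≤ c j then (1 : ℝ) else 0))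
          atTop (𝓝 1)) := by
  constructor
  · intro hX
    obtain ⟨c, c_nonneg, c_antitone, c_tendsto, norm_le⟩ :=
      exists_antitone_norm_vectorBlockSum_le hX
    refine ⟨c, c_nonneg, c_antitone, c_tendsto, fun n hn => tendsto_postMean ?_⟩
    simpa only [norm_le n hn, if_true] using tendsto_const_nhds
  · rintro ⟨c, -, -, c_tendsto, postMean_tendsto_one⟩
    by_contra hX
    obtain ⟨ε, ε_pos, n, n_pos, le_norm⟩ := exists_le_norm_vectorBlockSum hX
    refine zero_ne_one (tendsto_nhds_unique (tendsto_postMean ?_) (postMean_tendsto_one n n_pos))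
    refine tendsto_const_nhds.congr' ?_
    filter_upwards [c_tendsto.eventually_lt_const ε_pos, eventually_ge_atTop 1] with j c_lt hj
    exact (if_neg (c_lt.trans_le (le_norm j hj)).not_ge).symm

/-- `∑ Xᵢ` converges iff there is a nonnegative nonincreasing
sequence `c_j → 0` such that for every sequence of positive block lengths the
recursive posterior mean tends to `1`. -/
theorem convergence_iff_posterior_mean_tendsto_one (X : ℕ → ℝ) :
    (∃ l : ℝ, Tendsto (fun N : ℕ => ∑ i ∈ Finset.Icc 1 N, X i) atTop (nhds l)) ↔
    (∃ c : ℕ → ℝ, (∀ j, 0 ≤ c j) ∧ Antitone c ∧ Tendsto c atTop (nhds 0) ∧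
      ∀ n : ℕ → ℕ, (∀ j, 0 < n j) →
        Tendsto (postMean (fun j => if |blockSum X n j| ≤ c j then (1 : ℝ) else 0))
          atTop (nhds 1)) :=
  cauchy_map_iff_exists_tendsto.symm.trans (convergence_iff_posterior_mean_tendsto_one_general X)
end

section
/- Suppose a₁, a₂, b₁, b₂ are nonnegative reals, that the base 1 − log i/i − (log log i/i)·cos²(1/i)·(a + (−1)^i b) is nonnegative for every i ≥ 3 and every pair (a,b) among those considered, and that the series S^{a,b} = ∑_{i=3}^∞ (1 − log i/i − (log log i/i)·cos²(1/i)·(a + (−1)^i b))^i converges for each pair considered. Then S^{a,b} is nonincreasing in a and nondecreasing in b: if a₁ ≤ a₂ then S^{a₂,b} ≤ S^{a₁,b}, and if b₁ ≤ b₂ then S^{a,b₁} ≤ S^{a,b₂}. -/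
open Filter

/-- The `i`-th term of the series `S^{a,b}` of Example 4:
`(1 - log i / i - (log log i / i) · cos²(1/i) · (a + (-1)^i b))^i`. -/
noncomputable def exTerm (a b : ℝ) (i : ℕ) : ℝ :=
  (1 - Real.log i / i -
      (Real.log (Real.log i) / i) * (Real.cos (1 / i)) ^ 2 * (a + (-1 : ℝ) ^ i * b)) ^ i

/-!
Write the `i`-th term as `B^i` with `B = base c i` and `c = a + (-1)^i b`. The base decreases in
`c`, so the series decreases in `a` term by term. Raising `b` raises the odd terms and lowers the
even ones; since `y ↦ y^i` lies above its tangents, a partial sum grows by at least `b₂ - b₁` times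
an alternating sum of slopes `weight i * B^(i-1)`.

Convergence forces `1 ≤ a`: otherwise the odd terms dominate a multiple of `1 / (i log i)`.

If `1 ≤ a ≤ 5`, all slopes may be taken at `c = a`. They are log-convex from `i = 9` on, so the
alternating tail is at least half its first term, and the finitely many remaining slopes are
estimated numerically.

If `5 ≤ a`, nonnegativity of the base at `i = 6` gives `a + b ≤ 7.43`. The slope at `i = 3`,
`c = 7.43` then outweighs the slopes at `c = 5` of all even indices, which are
`O(1 / (i log⁴ i))` and have a telescoping majorant.
-/

namespace exTerm

open Real Set

/-! ### Elementary estimates -/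

lemma pow_add_mul_sub_le_pow {x y : ℝ} (hx : 0 ≤ x) (hy : 0 ≤ y) (n : ℕ) :
    x ^ (n + 1) + (n + 1) * x ^ n * (y - x) ≤ y ^ (n + 1) := by
  induction n with
  | zero => simp
  | succ n ih =>
    have hgap : 0 ≤ (n + 1) * x ^ n * (y - x) ^ 2 := by positivity
    calc x ^ (n + 1 + 1) + ((n + 1 : ℕ) + 1) * x ^ (n + 1) * (y - x)
        = y * (x ^ (n + 1) + (n + 1) * x ^ n * (y - x)) - (n + 1) * x ^ n * (y - x) ^ 2 := by
          push_cast; ring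
      _ ≤ y ^ (n + 1 + 1) := by
          rw [pow_succ' y]
          linarith [mul_le_mul_of_nonneg_left ih hy]

lemma half_add_le_sum_range_neg_one_pow_mul {g : ℕ → ℝ}
    (hg : ∀ n, g (n + 1) ≤ (g n + g (n + 2)) / 2) (k : ℕ) :
    (g 0 + g (2 * k)) / 2 ≤ ∑ j ∈ Finset.range (2 * k + 1), (-1) ^ j * g j := by
  induction k with
  | zero => simp
  | succ k ih =>
    rw [mul_add_one, Finset.sum_range_succ, Finset.sum_range_succ,
      Odd.neg_one_pow ⟨k, rfl⟩, Even.neg_one_pow ⟨k + 1, by ring⟩]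
    linarith [hg (2 * k)]

lemma sum_Icc_three_eq_sum_range (f : ℕ → ℝ) (n : ℕ) :
    ∑ i ∈ Finset.Icc 3 (n + 2), f i = ∑ j ∈ Finset.range n, f (j + 3) := by
  rw [← Finset.Ico_add_one_right_eq_Icc, Finset.sum_Ico_eq_sum_range]
  simp only [add_comm 3, Nat.add_assoc, Nat.reduceAdd, Nat.add_sub_cancel]

lemma log_one_sub_le {y : ℝ} (hy₀ : 0 ≤ y) (hy₁ : y < 1) : log (1 - y) ≤ -y - y ^ 2 / 2 := by
  have := sum_le_hasSum (Finset.range 2) (fun n _ => by positivity)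
    (hasSum_pow_div_log_of_abs_lt_one (by rwa [abs_of_nonneg hy₀]))
  norm_num [Finset.sum_range_succ] at this
  linarith

lemma one_sub_div_pow_pred_le_exp_neg {U : ℝ} {n : ℕ} (hn : 2 ≤ n) (hUn : U < n)
    (hU : 2 * n ≤ U * (n - 1)) : (1 - U / n) ^ (n - 1) ≤ exp (-U) := by
  have hn' : (2 : ℝ) ≤ n := by exact_mod_cast hn
  have hU₀ : 0 ≤ U := by nlinarith
  have hy₁ : U / n < 1 := (div_lt_one (by linarith)).2 hUn
  rw [← log_le_iff_le_exp (pow_pos (sub_pos.2 hy₁) _), log_pow, Nat.cast_pred (by omega)]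
  have hlog := mul_le_mul_of_nonneg_left (log_one_sub_le (by positivity) hy₁)
    (show (0 : ℝ) ≤ n - 1 by linarith)
  have hsq : U * (2 * n) ≤ U * (U * (n - 1)) := by gcongr
  have hgap : (n - 1) * (-(U / n) - (U / n) ^ 2 / 2) + U =
      (U * (2 * n) - U * (U * (n - 1))) / (2 * n ^ 2) := by
    field_simp
    ring
  have : (U * (2 * n) - U * (U * (n - 1))) / (2 * n ^ 2) ≤ 0 :=
    div_nonpos_of_nonpos_of_nonneg (by linarith) (by positivity)
  linarith

lemma exp_neg_sub_one_le_one_sub_div_pow {U : ℝ} {n : ℕ} (hn₀ : n ≠ 0) (hn : U ^ 2 + U ≤ n) :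
    exp (-U - 1) ≤ (1 - U / n) ^ n := by
  have hn' : (0 : ℝ) < n := by positivity
  have hUn : U < n := by nlinarith
  have hbase : 0 < 1 - U / n := sub_pos.2 ((div_lt_one hn').2 hUn)
  rw [← le_log_iff_exp_le (pow_pos hbase n), log_pow]
  calc -U - 1 ≤ n * (1 - (1 - U / n)⁻¹) := by
        have : 0 < n - U := sub_pos.2 hUn
        rw [show n * (1 - (1 - U / n)⁻¹) = -U - U ^ 2 / (n - U) by field_simp; ring]
        have : U ^ 2 / (n - U) ≤ 1 := (div_le_one (by linarith)).2 (by linarith)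
        linarith
    _ ≤ n * log (1 - U / n) := by gcongr; exact one_sub_inv_le_log_of_pos hbase

lemma mul_exp_neg_mul_le {s : ℝ} (hs : 0 < s) (y : ℝ) : y * exp (-(s * y)) ≤ exp (-1) / s := by
  rw [le_div_iff₀ hs]
  linarith [mul_exp_neg_le_exp_neg_one (s * y)]

lemma three_mul_sub_div_pow_le {p q : ℝ} (hp : 0 < p) (hpq : p ≤ q) :
    3 * (q - p) / q ^ 4 ≤ 1 / p ^ 3 - 1 / q ^ 3 := by
  obtain ⟨d, hd, rfl⟩ : ∃ d, 0 ≤ d ∧ q = p + d := ⟨q - p, sub_nonneg.2 hpq, by ring⟩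
  have : 1 / p ^ 3 - 1 / (p + d) ^ 3 - 3 * (p + d - p) / (p + d) ^ 4 =
      d ^ 2 * (6 * p ^ 2 + 4 * p * d + d ^ 2) / (p ^ 3 * (p + d) ^ 4) := by
    field_simp
    ring
  have : 0 ≤ d ^ 2 * (6 * p ^ 2 + 4 * p * d + d ^ 2) / (p ^ 3 * (p + d) ^ 4) := by positivity
  linarith

lemma one_div_mul_log_pow_four_le {x : ℝ} (hx : 3 < x) :
    1 / (x * log x ^ 4) ≤ (1 / log (x - 2) ^ 3 - 1 / log x ^ 3) / 6 := by
  have hp : 0 < log (x - 2) := log_pos (by linarith)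
  have hgap : 2 / x ≤ log x - log (x - 2) := by
    have := log_le_sub_one_of_pos (div_pos (show 0 < x - 2 by linarith) (show 0 < x by linarith))
    rw [log_div (by linarith) (by linarith), sub_div, div_self (by linarith)] at this
    linarith
  have hpq : log (x - 2) ≤ log x := log_le_log (by linarith) (by linarith)
  have hq : 0 < log x := hp.trans_le hpq
  calc 1 / (x * log x ^ 4) = 3 * (2 / x) / log x ^ 4 / 6 := by field_simp; norm_num
    _ ≤ 3 * (log x - log (x - 2)) / log x ^ 4 / 6 := by gcongr
    _ ≤ (1 / log (x - 2) ^ 3 - 1 / log x ^ 3) / 6 := by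
        gcongr
        exact three_mul_sub_div_pow_le hp hpq

lemma log_log_le {x : ℝ} (hx : 1 < x) : log (log x) ≤ log x / 3 + 1 / 10 := by
  have hlog3 := log_three_lt_d9
  have htangent := log_le_sub_one_of_pos (div_pos (log_pos hx) (by norm_num : (0 : ℝ) < 3))
  rw [log_div (log_pos hx).ne' (by norm_num)] at htangent
  linarith

lemma not_summable_one_div_mul_log : ¬Summable fun n : ℕ => 1 / (n * log n) := by
  have hanti : ∀ᶠ n : ℕ in atTop,
      1 / ((n + 1 : ℕ) * log (n + 1 : ℕ)) ≤ 1 / (n * log n : ℝ) := by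
    filter_upwards [eventually_ge_atTop 2] with n hn
    have hn : (1 : ℝ) < n := by exact_mod_cast hn
    have hlog := log_pos hn
    gcongr <;> simp
  rw [← summable_condensed_iff_of_eventually_nonneg
    (.of_forall fun n => by simp only [Pi.zero_apply]; positivity) hanti]
  refine fun h => not_summable_one_div_natCast ((h.mul_right (log 2)).congr fun k => ?_)
  have := log_pos one_lt_two
  rw [Nat.cast_pow, Nat.cast_ofNat, log_pow]
  field_simp

lemma not_summable_one_div_odd_mul_log :
    ¬Summable fun n : ℕ => 1 / ((2 * n + 3 : ℕ) * log (2 * n + 3 : ℕ)) := by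
  refine fun h => not_summable_one_div_mul_log
    ((h.mul_left 6).of_norm_bounded_eventually_nat ?_)
  filter_upwards [eventually_ge_atTop 3] with n hn
  have hn : (3 : ℝ) ≤ n := by exact_mod_cast hn
  have hlog : 0 < log n := log_pos (by linarith)
  have hlog' : log (2 * n + 3 : ℕ) ≤ 2 * log n := by
    rw [show 2 * log n = log (n ^ 2) by rw [log_pow]; norm_num]
    exact log_le_log (by positivity) (by push_cast; nlinarith)
  rw [norm_of_nonneg (by positivity), mul_one_div, div_le_div_iff₀ (by positivity)
    (mul_pos (by positivity) (log_pos (by push_cast; linarith)))]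
  calc 1 * ((2 * n + 3 : ℕ) * log (2 * n + 3 : ℕ))
      ≤ 1 * (3 * n * (2 * log n)) := by gcongr; push_cast; linarith
    _ = 6 * (n * log n) := by ring

lemma hasDerivAt_const_div (k : ℝ) {x : ℝ} (hx : x ≠ 0) :
    HasDerivAt (fun y => k / y) (-k / x ^ 2) x := by
  simpa using (hasDerivAt_const x k).fun_div (hasDerivAt_id x) hx

lemma hasDerivAt_cos_inv_sq {x : ℝ} (hx : x ≠ 0) :
    HasDerivAt (fun y => cos (1 / y) ^ 2) (sin (2 / x) / x ^ 2) x := by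
  refine ((hasDerivAt_const_div 1 hx).cos.fun_pow 2).congr_deriv ?_
  rw [show 2 / x = 2 * (1 / x) by ring, sin_two_mul]
  ring

lemma hasDerivAt_log_log {x : ℝ} (hx : 1 < x) :
    HasDerivAt (fun y => log (log y)) (1 / (x * log x)) x := by
  refine ((hasDerivAt_log (by positivity)).log (log_pos hx).ne').congr_deriv ?_
  field_simp

lemma cos_inv_sq_le_one (x : ℝ) : cos (1 / x) ^ 2 ≤ 1 := cos_sq_le_one _

lemma one_sub_inv_sq_le_cos_inv_sq (x : ℝ) : 1 - 1 / x ^ 2 ≤ cos (1 / x) ^ 2 := by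
  rw [cos_sq', ← one_div_pow]
  exact sub_le_sub_left sin_sq_le_sq 1

lemma cos_inv_sq_mem_Icc {x : ℝ} (hx : 1 ≤ x) :
    cos (1 / x) ^ 2 ∈ Icc ((1 - (1 / x) ^ 2 / 2) ^ 2) (1 - (1 / x - (1 / x) ^ 3 / 6) ^ 2) := by
  have hx₀ : 0 ≤ 1 / x := by positivity
  have hx₁ : 1 / x ≤ 1 := (div_le_one (by linarith)).2 hx
  constructor
  · exact pow_le_pow_left₀ (by nlinarith) one_sub_sq_div_two_le_cos 2
  · rw [cos_sq']
    have : 0 ≤ 1 / x - (1 / x) ^ 3 / 6 := by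
      linarith [pow_le_of_le_one hx₀ hx₁ three_ne_zero]
    exact sub_le_sub_left (pow_le_pow_left₀ this (sin_ge_sub_cube hx₀) 2) 1

lemma sin_two_div_nonneg {x : ℝ} (hx : 1 ≤ x) : 0 ≤ sin (2 / x) := by
  have hπ := pi_gt_three
  exact sin_nonneg_of_nonneg_of_le_pi (by positivity)
    ((div_le_self (by norm_num) hx).trans (by linarith))

/-- Eight terms of the series of `artanh ((y - 1) / (y + 1)) = log y / 2`, for enclosing `log y`. -/
noncomputable def artanhSum (y : ℝ) : ℝ :=
  ∑ k ∈ Finset.range 8, ((y - 1) / (y + 1)) ^ (2 * k + 1) / (2 * k + 1)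

lemma log_mem_Icc_artanhSum {y : ℝ} (hy : 1 ≤ y) :
    log y ∈ Icc (2 * artanhSum y)
      (2 * (artanhSum y + ((y - 1) / (y + 1)) ^ 17 / (1 - ((y - 1) / (y + 1)) ^ 2))) := by
  have hx₀ : 0 ≤ (y - 1) / (y + 1) := div_nonneg (by linarith) (by linarith)
  have hx₁ : (y - 1) / (y + 1) < 1 := (div_lt_one (by linarith)).2 (by linarith)
  have hy' : (1 + (y - 1) / (y + 1)) / (1 - (y - 1) / (y + 1)) = y := by
    have : y + 1 ≠ 0 := by linarith
    field_simp
    ring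
  have hlower := sum_range_le_log_div hx₀ hx₁ 8
  have hupper := log_div_le_sum_range_add hx₀ hx₁ 8
  rw [hy'] at hlower hupper
  rw [artanhSum]
  constructor <;> linarith

/-! ### Weights and bases -/

/-- The coefficient of `c / x` in the base: `log log i · cos²(1/i)` at a real index. -/
noncomputable def weight (x : ℝ) : ℝ := log (log x) * cos (1 / x) ^ 2

/-- The base of the series, with `c` standing for the combined parameter `a + (-1)^i b` and the
index replaced by a real `x`. -/
noncomputable def base (c x : ℝ) : ℝ := 1 - (log x + c * weight x) / x

lemma weight_nonneg {x : ℝ} (hx : 3 ≤ x) : 0 ≤ weight x := by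
  have hlog : 1 ≤ log x := by
    linarith [log_three_gt_d9, log_le_log (by norm_num) hx]
  exact mul_nonneg (log_nonneg hlog) (sq_nonneg _)

lemma base_anti {c d x : ℝ} (hcd : c ≤ d) (hx : 3 ≤ x) : base d x ≤ base c x := by
  have := weight_nonneg hx
  rw [base, base]
  gcongr

lemma base_mem_Icc {c x p q r s : ℝ} (hc : 0 ≤ c) (hx : 0 ≤ x) (hL : log x ∈ Icc p q)
    (hm : weight x ∈ Icc r s) : base c x ∈ Icc (1 - (q + c * s) / x) (1 - (p + c * r) / x) := by
  obtain ⟨hp, hq⟩ := hL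
  obtain ⟨hr, hs⟩ := hm
  rw [base]
  constructor <;> gcongr

/-- The derivative of `weight` on `(1, ∞)`. -/
noncomputable def weightDeriv (x : ℝ) : ℝ :=
  cos (1 / x) ^ 2 / (x * log x) + log (log x) * sin (2 / x) / x ^ 2

/-- The second derivative of `weight` on `(1, ∞)`. -/
noncomputable def weightDeriv₂ (x : ℝ) : ℝ :=
  -(cos (1 / x) ^ 2 * (log x + 1)) / (x * log x) ^ 2 + 2 * sin (2 / x) / (x ^ 3 * log x)
    - log (log x) * (2 * cos (2 / x) / x ^ 4 + 2 * sin (2 / x) / x ^ 3)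

lemma hasDerivAt_weight {x : ℝ} (hx : 1 < x) : HasDerivAt weight (weightDeriv x) x := by
  refine ((hasDerivAt_log_log hx).fun_mul (hasDerivAt_cos_inv_sq (by positivity))).congr_deriv ?_
  rw [weightDeriv]
  ring

lemma hasDerivAt_weightDeriv {x : ℝ} (hx : 1 < x) :
    HasDerivAt weightDeriv (weightDeriv₂ x) x := by
  have hx0 : x ≠ 0 := by positivity
  have hL : log x ≠ 0 := (log_pos hx).ne'
  have hxL : HasDerivAt (fun y => y * log y) (log x + 1) x := by
    refine ((hasDerivAt_id x).fun_mul (hasDerivAt_log hx0)).congr_deriv ?_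
    simp [hx0]
  have hcos := (hasDerivAt_cos_inv_sq hx0).fun_div hxL (mul_ne_zero hx0 hL)
  have hsin := ((hasDerivAt_log_log hx).fun_mul (hasDerivAt_const_div 2 hx0).sin).fun_div
    (hasDerivAt_pow 2 x) (pow_ne_zero 2 hx0)
  refine (hcos.fun_add hsin).congr_deriv ?_
  rw [weightDeriv₂]
  field_simp
  ring

section NineLe

variable {x : ℝ}

lemma log_gt_of_nine_le (hx : 9 ≤ x) : 2.19 < log x := by
  have hlog9 : log 9 = 2 * log 3 := by
    rw [show (9 : ℝ) = 3 ^ 2 by norm_num, log_pow]; norm_num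
  linarith [log_three_gt_d9, log_le_log (by norm_num) hx]

lemma log_log_gt_of_nine_le (hx : 9 ≤ x) : 0.77 < log (log x) := by
  have hlog2 := log_two_gt_d9
  have hratio : 1 - (2.19 / 2 : ℝ)⁻¹ ≤ log (2.19 / 2) :=
    one_sub_inv_le_log_of_pos (by norm_num)
  rw [log_div (by norm_num) (by norm_num)] at hratio
  have hmono := log_le_log (by norm_num) (log_gt_of_nine_le hx).le
  norm_num at hratio hmono ⊢
  linarith

lemma one_div_log_le (hx : 9 ≤ x) : 1 / log x ≤ 39 / 40 * log (log x) := by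
  have hL := log_gt_of_nine_le hx
  rw [div_le_iff₀ (by linarith)]
  nlinarith [log_log_gt_of_nine_le hx]

lemma one_div_sq_le_of_nine_le (hx : 9 ≤ x) : 1 / x ^ 2 ≤ 1 / 81 := by
  gcongr
  nlinarith

lemma cos_inv_sq_ge_of_nine_le (hx : 9 ≤ x) : 80 / 81 ≤ cos (1 / x) ^ 2 := by
  linarith [one_sub_inv_sq_le_cos_inv_sq x, one_div_sq_le_of_nine_le hx]

lemma log_log_le_weight (hx : 9 ≤ x) : log (log x) ≤ 81 / 80 * weight x := by
  rw [weight]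
  nlinarith [log_log_gt_of_nine_le hx, cos_inv_sq_ge_of_nine_le hx]

lemma weight_le_log_log (hx : 9 ≤ x) : weight x ≤ log (log x) :=
  mul_le_of_le_one_right (by linarith [log_log_gt_of_nine_le hx]) (cos_sq_le_one _)

lemma three_quarters_le_weight (hx : 9 ≤ x) : 3 / 4 ≤ weight x := by
  linarith [log_log_gt_of_nine_le hx, log_log_le_weight hx]

lemma weight_le (hx : 9 ≤ x) : weight x ≤ log x / 3 + 1 / 10 :=
  (weight_le_log_log hx).trans (log_log_le (by linarith))

lemma sin_two_div_div_mem (hx : 9 ≤ x) : sin (2 / x) / x ∈ Icc 0 (2 / 81) := by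
  refine ⟨div_nonneg (sin_two_div_nonneg (by linarith)) (by linarith), ?_⟩
  have hsin : sin (2 / x) / x ≤ 2 / x / x := by
    gcongr
    exact sin_le (by positivity)
  calc sin (2 / x) / x ≤ 2 / x / x := hsin
    _ = 2 * (1 / x ^ 2) := by ring
    _ ≤ 2 / 81 := by linarith [one_div_sq_le_of_nine_le hx]

lemma mul_weightDeriv (hx : 1 < x) :
    x * weightDeriv x = cos (1 / x) ^ 2 * (1 / log x) + log (log x) * (sin (2 / x) / x) := by
  have hL := log_pos hx
  rw [weightDeriv]
  field_simp

lemma neg_sq_mul_weightDeriv₂ (hx : 1 < x) :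
    -(x ^ 2 * weightDeriv₂ x) = cos (1 / x) ^ 2 * ((log x + 1) / log x ^ 2)
      + 2 * (sin (2 / x) / x) * (log (log x) - 1 / log x)
      + 2 * log (log x) * (cos (2 / x) * (1 / x ^ 2)) := by
  have hL := log_pos hx
  rw [weightDeriv₂]
  field_simp
  ring

lemma mul_weightDeriv_nonneg (hx : 9 ≤ x) : 0 ≤ x * weightDeriv x := by
  have hL := log_gt_of_nine_le hx
  have hl := log_log_gt_of_nine_le hx
  have hS := (sin_two_div_div_mem hx).1
  rw [mul_weightDeriv (by linarith)]
  positivity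

lemma mul_weightDeriv_le (hx : 9 ≤ x) : x * weightDeriv x ≤ 1 / log x + weight x / 40 := by
  have hL : 0 < 1 / log x := by have := log_gt_of_nine_le hx; positivity
  rw [mul_weightDeriv (by linarith)]
  nlinarith [log_log_gt_of_nine_le hx, log_log_le_weight hx, cos_inv_sq_le_one x,
    (sin_two_div_div_mem hx).1, (sin_two_div_div_mem hx).2]

lemma mul_weightDeriv_le_weight (hx : 9 ≤ x) : x * weightDeriv x ≤ weight x := by
  have hl := log_log_gt_of_nine_le hx
  rw [mul_weightDeriv (by linarith), weight]
  nlinarith [(sin_two_div_div_mem hx).2, one_div_log_le hx, cos_inv_sq_ge_of_nine_le hx]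

lemma weight_sub_mul_weightDeriv_le (hx : 9 ≤ x) :
    weight x - x * weightDeriv x ≤ log x / 3 + 1 / 10 - 1 / log x := by
  have hl := log_log_gt_of_nine_le hx
  have hgap : 0 ≤ log (log x) - 1 / log x := by linarith [one_div_log_le hx]
  have hsin : 0 ≤ log (log x) * (sin (2 / x) / x) :=
    mul_nonneg (by linarith) (sin_two_div_div_mem hx).1
  rw [mul_weightDeriv (by linarith), weight]
  nlinarith [cos_inv_sq_le_one x, log_log_le (show 1 < x by linarith)]

lemma neg_sq_mul_weightDeriv₂_ge (hx : 9 ≤ x) :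
    80 / 81 * ((log x + 1) / log x ^ 2) ≤ -(x ^ 2 * weightDeriv₂ x) := by
  have hL := log_gt_of_nine_le hx
  have hl := log_log_gt_of_nine_le hx
  have hgap : 0 ≤ log (log x) - 1 / log x := by linarith [one_div_log_le hx]
  have hS := (sin_two_div_div_mem hx).1
  have hcos : 0 ≤ cos (2 / x) := by
    have hπ := pi_gt_three
    have : 2 / x ≤ 1 := (div_le_one (by linarith)).2 (by linarith)
    have : 0 ≤ 2 / x := by positivity
    exact cos_nonneg_of_neg_pi_div_two_le_of_le (by linarith) (by linarith)
  rw [neg_sq_mul_weightDeriv₂ (by linarith)]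
  have hmain : 80 / 81 * ((log x + 1) / log x ^ 2) ≤
      cos (1 / x) ^ 2 * ((log x + 1) / log x ^ 2) := by
    gcongr
    exact cos_inv_sq_ge_of_nine_le hx
  have : 0 ≤ 2 * (sin (2 / x) / x) * (log (log x) - 1 / log x) := by positivity
  have : 0 ≤ 2 * log (log x) * (cos (2 / x) * (1 / x ^ 2)) := by positivity
  linarith

lemma neg_sq_mul_weightDeriv₂_le (hx : 9 ≤ x) :
    -(x ^ 2 * weightDeriv₂ x) ≤ (log x + 1) / log x ^ 2 + 3 / 40 * weight x := by
  have hL := log_gt_of_nine_le hx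
  have hl := log_log_gt_of_nine_le hx
  have hmain : cos (1 / x) ^ 2 * ((log x + 1) / log x ^ 2) ≤ (log x + 1) / log x ^ 2 :=
    mul_le_of_le_one_left (by positivity) (cos_inv_sq_le_one x)
  have hsin : 2 * (sin (2 / x) / x) * (log (log x) - 1 / log x) ≤ 4 / 81 * log (log x) := by
    have : 0 < 1 / log x := by positivity
    nlinarith [(sin_two_div_div_mem hx).1, (sin_two_div_div_mem hx).2]
  have hcos : cos (2 / x) * (1 / x ^ 2) ≤ 1 / 81 :=
    (mul_le_of_le_one_left (by positivity) (cos_le_one _)).trans (one_div_sq_le_of_nine_le hx)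
  rw [neg_sq_mul_weightDeriv₂ (by linarith)]
  nlinarith [log_log_le_weight hx]

end NineLe

/-! ### Log-convexity of the slopes -/

/-- A polynomial minorant, up to a positive factor, of `logSlopeDeriv₂ c x` with `L = log x`: it
comes from clearing denominators in `curvature_bound_mono` after `weight x` and its derivatives have
been replaced by bounds in terms of `log x`. -/
noncomputable def convexityPoly (c x L : ℝ) : ℝ :=
  (x - L - c * (L / 3 + 1 / 10)) *
      ((x - 1) * (L ^ 2 + 80 / 81 * c * (L + 1))
        + 2 * L * (L * (L - 1 + c * (L / 3 + 1 / 10)) - c)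
        - (4 / 3 * (L + 1) + 3 / 40 * L ^ 2 + (4 / 3 + L / 40) ^ 2) * (x - L - 3 / 4 * c))
    - (x - 1) * (L * (L - 1 + c * (L / 3 + 1 / 10)) - c) ^ 2

lemma cubic_log_le {x : ℝ} (hx : 9 ≤ x) :
    8.9 * (1 + (log x - 2.19) + (log x - 2.19) ^ 2 / 2 + (log x - 2.19) ^ 3 / 6) ≤ x := by
  set s := log x - 2.19 with hs
  have hL := log_gt_of_nine_le hx
  have hexp : 1 + s + s ^ 2 / 2 + s ^ 3 / 6 ≤ exp s := by
    have := sum_le_exp_of_nonneg (show 0 ≤ s by linarith) 4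
    simp only [Finset.sum_range_succ, Finset.range_zero, Finset.sum_empty, Nat.factorial] at this
    norm_num at this
    linarith
  have h219 : 8.9 ≤ exp 2.19 := by
    rw [← log_le_iff_le_exp (by norm_num)]
    have := log_le_sub_one_of_pos (show (0:ℝ) < 8.9 / 9 by norm_num)
    rw [log_div (by norm_num) (by norm_num), show (9 : ℝ) = 3 ^ 2 by norm_num, log_pow] at this
    norm_num at this ⊢
    linarith [log_three_lt_d9]
  calc 8.9 * (1 + s + s ^ 2 / 2 + s ^ 3 / 6) ≤ exp 2.19 * exp s := by
        have : 0 ≤ s := by linarith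
        gcongr
    _ = x := by rw [← exp_add, hs, add_sub_cancel, exp_log (by linarith)]

lemma convexityPoly_nonneg_of_ge {s c x : ℝ} (hs : 0 ≤ s) (hc : c ∈ Icc 1 5)
    (hx : 8.9 * (1 + s + s ^ 2 / 2 + s ^ 3 / 6) ≤ x) : 0 ≤ convexityPoly c x (2.19 + s) := by
  obtain ⟨t, ht, rfl⟩ : ∃ t, 0 ≤ t ∧ x = 8.9 * (1 + s + s ^ 2 / 2 + s ^ 3 / 6) + t :=
    ⟨_, sub_nonneg.2 hx, by ring⟩
  obtain ⟨hc₁, hc₅⟩ := hc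
  -- Expanded in `s` and `t`, the values at `c = 1` and `c = 5` have nonnegative coefficients, and
  -- the polynomial is concave in `c`: it exceeds its chord by `(c - 1) (5 - c) K`.
  generalize hX : 8.9 * (1 + s + s ^ 2 / 2 + s ^ 3 / 6) + t = X
  have hone : 0 ≤ convexityPoly 1 X (2.19 + s) := by
    rw [convexityPoly, ← hX]; ring_nf; positivity
  have hfive : 0 ≤ convexityPoly 5 X (2.19 + s) := by
    rw [convexityPoly, ← hX]; ring_nf; positivity
  obtain ⟨K, hK, hconcave⟩ : ∃ K, 0 ≤ K ∧ ∀ c, convexityPoly c X (2.19 + s) =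
      (5 - c) / 4 * convexityPoly 1 X (2.19 + s) + (c - 1) / 4 * convexityPoly 5 X (2.19 + s)
        + (c - 1) * (5 - c) * K := by
    let L := 2.19 + s
    refine ⟨(L / 3 + 1 / 10) * ((X - 1) * (80 / 81 * (L + 1)) + 2 * L * (L * (L / 3 + 1 / 10) - 1)
      + (4 / 3 * (L + 1) + 3 / 40 * L ^ 2 + (4 / 3 + L / 40) ^ 2) * (3 / 4))
      + (X - 1) * (L * (L / 3 + 1 / 10) - 1) ^ 2, ?_, fun c => ?_⟩
    · simp only [L, ← hX]; ring_nf; positivity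
    · simp only [L, convexityPoly]; ring
  rw [hconcave]
  have := sub_nonneg.2 hc₁
  have := sub_nonneg.2 hc₅
  positivity

/-- `x²` times the derivative of `base c` at `x`. -/
noncomputable def scaledBaseDeriv (c x : ℝ) : ℝ :=
  log x - 1 + c * (weight x - x * weightDeriv x)

/-- The logarithm of the slope `weight x · base c x ^ (x - 1)`, at a real argument. -/
noncomputable def logSlope (c x : ℝ) : ℝ := log (weight x) + (x - 1) * log (base c x)

/-- The derivative of `logSlope c`. -/
noncomputable def logSlopeDeriv (c x : ℝ) : ℝ :=
  weightDeriv x / weight x + log (base c x) +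
    (x - 1) * (scaledBaseDeriv c x / (x ^ 2 * base c x))

/-- The second derivative of `logSlope c`. -/
noncomputable def logSlopeDeriv₂ (c x : ℝ) : ℝ :=
  (weightDeriv₂ x * weight x - weightDeriv x ^ 2) / weight x ^ 2 +
    ((2 * scaledBaseDeriv c x + (x - 1) * (1 - c * (x ^ 2 * weightDeriv₂ x))) / (x * base c x)
      - (x - 1) * (scaledBaseDeriv c x / (x * base c x)) ^ 2) / x ^ 2

lemma hasDerivAt_base (c : ℝ) {x : ℝ} (hx : 1 < x) :
    HasDerivAt (base c) (scaledBaseDeriv c x / x ^ 2) x := by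
  have hx0 : x ≠ 0 := by positivity
  refine ((((hasDerivAt_log hx0).fun_add ((hasDerivAt_weight hx).const_mul c)).fun_div
    (hasDerivAt_id x) hx0).const_sub 1).congr_deriv ?_
  rw [scaledBaseDeriv]
  simp only [id]
  field_simp
  ring

lemma hasDerivAt_scaledBaseDeriv (c : ℝ) {x : ℝ} (hx : 1 < x) :
    HasDerivAt (scaledBaseDeriv c) ((1 - c * (x ^ 2 * weightDeriv₂ x)) / x) x := by
  have hx0 : x ≠ 0 := by positivity
  refine (((hasDerivAt_log hx0).sub_const 1).fun_add (((hasDerivAt_weight hx).fun_sub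
    ((hasDerivAt_id x).fun_mul (hasDerivAt_weightDeriv hx))).const_mul c)).congr_deriv ?_
  simp only [id]
  field_simp
  ring

lemma hasDerivAt_logSlope {c x : ℝ} (hx : 1 < x) (hm : weight x ≠ 0) (hB : base c x ≠ 0) :
    HasDerivAt (logSlope c) (logSlopeDeriv c x) x := by
  have hx0 : x ≠ 0 := by positivity
  refine (((hasDerivAt_weight hx).log hm).fun_add (((hasDerivAt_id x).sub_const 1).fun_mul
    ((hasDerivAt_base c hx).log hB))).congr_deriv ?_
  rw [logSlopeDeriv]
  simp only [id]
  field_simp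
  ring

lemma hasDerivAt_logSlopeDeriv {c x : ℝ} (hx : 1 < x) (hm : weight x ≠ 0) (hB : base c x ≠ 0) :
    HasDerivAt (logSlopeDeriv c) (logSlopeDeriv₂ c x) x := by
  have hx0 : x ≠ 0 := by positivity
  have hquot := (hasDerivAt_scaledBaseDeriv c hx).fun_div
    ((hasDerivAt_pow 2 x).fun_mul (hasDerivAt_base c hx)) (mul_ne_zero (pow_ne_zero 2 hx0) hB)
  refine ((((hasDerivAt_weightDeriv hx).fun_div (hasDerivAt_weight hx) hm).fun_add
    ((hasDerivAt_base c hx).log hB)).fun_add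
      (((hasDerivAt_id x).sub_const 1).fun_mul hquot)).congr_deriv ?_
  rw [logSlopeDeriv₂]
  simp only [id]
  field_simp
  ring

lemma mul_base {c x : ℝ} (hx : x ≠ 0) : x * base c x = x - log x - c * weight x := by
  rw [base]
  field_simp
  ring

lemma le_mul_base {c x : ℝ} (hc : 0 ≤ c) (hx : 9 ≤ x) :
    x - log x - c * (log x / 3 + 1 / 10) ≤ x * base c x := by
  rw [mul_base (by positivity)]
  gcongr
  exact weight_le hx

lemma mul_base_lower_pos {c x : ℝ} (hc : c ≤ 5) (hx : 9 ≤ x) :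
    0 < x - log x - c * (log x / 3 + 1 / 10) := by
  have hL := log_gt_of_nine_le hx
  have hexp := cubic_log_le hx
  nlinarith [pow_pos (sub_pos.2 hL) 2, pow_pos (sub_pos.2 hL) 3]

lemma base_pos_of_nine_le {c x : ℝ} (hc₀ : 0 ≤ c) (hc₅ : c ≤ 5) (hx : 9 ≤ x) : 0 < base c x :=
  pos_of_mul_pos_right ((mul_base_lower_pos hc₅ hx).trans_le (le_mul_base hc₀ hx)) (by positivity)

lemma scaledBaseDeriv_le {c x : ℝ} (hc : 0 ≤ c) (hx : 9 ≤ x) :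
    scaledBaseDeriv c x ≤ log x - 1 + c * (log x / 3 + 1 / 10) - c / log x := by
  have := mul_le_mul_of_nonneg_left (weight_sub_mul_weightDeriv_le hx) hc
  rw [scaledBaseDeriv]
  linarith [show c * (1 / log x) = c / log x by ring]

lemma one_le_scaledBaseDeriv {c x : ℝ} (hc : 0 ≤ c) (hx : 9 ≤ x) : 1 ≤ scaledBaseDeriv c x := by
  have := mul_nonneg hc (sub_nonneg.2 (mul_weightDeriv_le_weight hx))
  rw [scaledBaseDeriv]
  linarith [log_gt_of_nine_le hx]

lemma scaled_log_weight_curvature_le {x : ℝ} (hx : 9 ≤ x) :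
    -(x ^ 2 * ((weightDeriv₂ x * weight x - weightDeriv x ^ 2) / weight x ^ 2)) ≤
      (4 / 3 * (log x + 1) + 3 / 40 * log x ^ 2 + (4 / 3 + log x / 40) ^ 2) / log x ^ 2 := by
  have hL := log_gt_of_nine_le hx
  have hm := three_quarters_le_weight hx
  have hinv : 1 / weight x ≤ 4 / 3 := by
    rw [div_le_div_iff₀ (by linarith) (by norm_num)]; linarith
  have hratio : x * weightDeriv x / weight x ≤ 4 / 3 / log x + 1 / 40 :=
    calc x * weightDeriv x / weight x ≤ (1 / log x + weight x / 40) / weight x := by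
          gcongr; exact mul_weightDeriv_le hx
      _ = 1 / weight x / log x + 1 / 40 := by field_simp
      _ ≤ 4 / 3 / log x + 1 / 40 := by gcongr
  have hcurv : -(x ^ 2 * weightDeriv₂ x) / weight x ≤ 4 / 3 * ((log x + 1) / log x ^ 2) + 3 / 40 :=
    calc -(x ^ 2 * weightDeriv₂ x) / weight x
        ≤ ((log x + 1) / log x ^ 2 + 3 / 40 * weight x) / weight x := by
          gcongr; exact neg_sq_mul_weightDeriv₂_le hx
      _ = 1 / weight x * ((log x + 1) / log x ^ 2) + 3 / 40 := by field_simp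
      _ ≤ 4 / 3 * ((log x + 1) / log x ^ 2) + 3 / 40 := by gcongr
  have hnonneg : 0 ≤ x * weightDeriv x / weight x :=
    div_nonneg (mul_weightDeriv_nonneg hx) (by linarith)
  calc _ = -(x ^ 2 * weightDeriv₂ x) / weight x + (x * weightDeriv x / weight x) ^ 2 := by
        field_simp
        ring
    _ ≤ 4 / 3 * ((log x + 1) / log x ^ 2) + 3 / 40 + (4 / 3 / log x + 1 / 40) ^ 2 := by gcongr
    _ = _ := by field_simp

lemma convexityPoly_nonneg {c x : ℝ} (hc : c ∈ Icc 1 5) (hx : 9 ≤ x) :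
    0 ≤ convexityPoly c x (log x) := by
  have hL := log_gt_of_nine_le hx
  simpa using convexityPoly_nonneg_of_ge (sub_pos.2 hL).le hc (cubic_log_le hx)

lemma curvature_bound_mono {x W W₁ W₂ D D₁ Q Q₁ R R₁ : ℝ} (hx : 1 ≤ x) (hW₁ : 0 < W₁)
    (hW₁W : W₁ ≤ W) (hWW₂ : W ≤ W₂) (hWx : W ≤ x - 1) (hD : 1 ≤ D) (hDD₁ : D ≤ D₁)
    (hQ : Q₁ ≤ Q) (hR : R ≤ R₁) (hR₁ : 0 ≤ R₁) :
    2 * D₁ + (x - 1) * Q₁ - (x - 1) * (D₁ ^ 2 / W₁) - R₁ * W₂ ≤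
      2 * D + (x - 1) * Q - (x - 1) * (D ^ 2 / W) - R * W := by
  have hW : 0 < W := hW₁.trans_le hW₁W
  have : 0 ≤ x - 1 := sub_nonneg.2 hx
  have hRW : R * W ≤ R₁ * W₂ := mul_le_mul hR hWW₂ hW.le hR₁
  have hQx : (x - 1) * Q₁ ≤ (x - 1) * Q := by gcongr
  have hD₁W : (x - 1) * (D₁ ^ 2 / W) ≤ (x - 1) * (D₁ ^ 2 / W₁) := by gcongr
  have hDW : 0 ≤ (D₁ - D) * ((x - 1) / W * (D₁ + D) - 2) := by
    have hk : 1 ≤ (x - 1) / W := (one_le_div hW).2 hWx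
    exact mul_nonneg (sub_nonneg.2 hDD₁) (by nlinarith)
  have hDW' : (D₁ - D) * ((x - 1) / W * (D₁ + D) - 2) =
      (x - 1) * (D₁ ^ 2 / W) - (x - 1) * (D ^ 2 / W) - 2 * (D₁ - D) := by ring
  linarith

lemma mul_base_mul_sq_mul_logSlopeDeriv₂ {c x : ℝ} (hx : x ≠ 0) (hB : base c x ≠ 0) :
    x * base c x * (x ^ 2 * logSlopeDeriv₂ c x) =
      2 * scaledBaseDeriv c x + (x - 1) * (1 - c * (x ^ 2 * weightDeriv₂ x))
        - (x - 1) * (scaledBaseDeriv c x ^ 2 / (x * base c x))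
        - -(x ^ 2 * ((weightDeriv₂ x * weight x - weightDeriv x ^ 2) / weight x ^ 2))
          * (x * base c x) := by
  rw [logSlopeDeriv₂]
  field_simp
  ring

lemma logSlopeDeriv₂_nonneg {c x : ℝ} (hc : c ∈ Icc 1 5) (hx : 9 ≤ x) :
    0 ≤ logSlopeDeriv₂ c x := by
  have hc₀ : 0 ≤ c := zero_le_one.trans hc.1
  have hL := log_gt_of_nine_le hx
  have hm := three_quarters_le_weight hx
  have hW := mul_base_lower_pos hc.2 hx
  have hB := base_pos_of_nine_le hc₀ hc.2 hx
  have hW₂ : x * base c x ≤ x - log x - 3 / 4 * c := by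
    rw [mul_base (by positivity)]
    nlinarith
  have hQ : 1 + c * (80 / 81 * ((log x + 1) / log x ^ 2)) ≤ 1 - c * (x ^ 2 * weightDeriv₂ x) := by
    nlinarith [neg_sq_mul_weightDeriv₂_ge hx]
  have hpoly : 0 ≤ convexityPoly c x (log x) /
      (log x ^ 2 * (x - log x - c * (log x / 3 + 1 / 10))) :=
    div_nonneg (convexityPoly_nonneg hc hx) (by positivity)
  have hbound := curvature_bound_mono (x := x) (by linarith) hW (le_mul_base hc₀ hx) hW₂
    (by linarith [hc.1]) (one_le_scaledBaseDeriv hc₀ hx) (scaledBaseDeriv_le hc₀ hx) hQ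
    (scaled_log_weight_curvature_le hx) (by positivity)
  have hprod : 0 ≤ x * base c x * (x ^ 2 * logSlopeDeriv₂ c x) := by
    rw [mul_base_mul_sq_mul_logSlopeDeriv₂ (by positivity) hB.ne']
    refine hpoly.trans (le_of_eq_of_le ?_ hbound)
    rw [convexityPoly]
    generalize x - log x - c * (log x / 3 + 1 / 10) = W₁ at hW
    field_simp
    ring
  exact nonneg_of_mul_nonneg_right (nonneg_of_mul_nonneg_right hprod (by positivity))
    (by positivity)

lemma convexOn_logSlope {c : ℝ} (hc : c ∈ Icc 1 5) : ConvexOn ℝ (Ici 9) (logSlope c) := by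
  have hx {x : ℝ} (hx : x ∈ Ici (9 : ℝ)) : 1 < x ∧ weight x ≠ 0 ∧ base c x ≠ 0 :=
    ⟨lt_of_lt_of_le (by norm_num) hx,
      (lt_of_lt_of_le (by norm_num) (three_quarters_le_weight hx)).ne',
      (base_pos_of_nine_le (zero_le_one.trans hc.1) hc.2 hx).ne'⟩
  have hderiv {x : ℝ} (h : x ∈ Ici (9 : ℝ)) :=
    hasDerivAt_logSlope (hx h).1 (hx h).2.1 (hx h).2.2
  refine convexOn_of_hasDerivWithinAt2_nonneg (convex_Ici 9)
    (fun x h => (hderiv h).continuousAt.continuousWithinAt)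
    (fun x h => (hderiv (interior_subset h)).hasDerivWithinAt)
    (fun x h => ?_) (fun x h => logSlopeDeriv₂_nonneg hc (interior_subset h))
  obtain ⟨h₁, h₂, h₃⟩ := hx (interior_subset h)
  exact (hasDerivAt_logSlopeDeriv h₁ h₂ h₃).hasDerivWithinAt

/-! ### Numerical values at small indices -/

lemma log_log_mem_Icc {x p q r s : ℝ} (hx : log x ∈ Icc p q) (hp : 1 ≤ p)
    (hr : r ≤ 2 * artanhSum p)
    (hs : 2 * (artanhSum q + ((q - 1) / (q + 1)) ^ 17 / (1 - ((q - 1) / (q + 1)) ^ 2)) ≤ s) :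
    log (log x) ∈ Icc r s := by
  have hpos : 0 < log x := by linarith [hx.1]
  exact ⟨(hr.trans (log_mem_Icc_artanhSum hp).1).trans (log_le_log (by linarith) hx.1),
    ((log_le_log hpos hx.2).trans
      (log_mem_Icc_artanhSum (hp.trans (hx.1.trans hx.2))).2).trans hs⟩

lemma weight_mem_Icc {x r s : ℝ} (hx : 1 ≤ x) (hl : log (log x) ∈ Icc r s) (hr : 0 ≤ r) :
    weight x ∈ Icc (r * (1 - (1 / x) ^ 2 / 2) ^ 2)
      (s * (1 - (1 / x - (1 / x) ^ 3 / 6) ^ 2)) := by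
  have hcos := cos_inv_sq_mem_Icc hx
  exact ⟨mul_le_mul hl.1 hcos.1 (sq_nonneg _) (hr.trans hl.1),
    mul_le_mul hl.2 hcos.2 (sq_nonneg _) (hr.trans (hl.1.trans hl.2))⟩

lemma log_three_mem : log 3 ∈ Icc 1.09861 1.09862 := by
  constructor <;> linarith [log_three_gt_d9, log_three_lt_d9]

lemma log_four_mem : log 4 ∈ Icc 1.38629 1.3863 := by
  rw [show (4 : ℝ) = 2 ^ 2 by norm_num, log_pow]
  constructor <;> push_cast <;> linarith [log_two_gt_d9, log_two_lt_d9]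

lemma log_five_mem : log 5 ∈ Icc 1.60943 1.60944 := by
  constructor <;> linarith [log_five_gt_d9, log_five_lt_d9]

lemma log_six_mem : log 6 ∈ Icc 1.79175 1.79176 := by
  rw [show (6 : ℝ) = 2 * 3 by norm_num, log_mul (by norm_num) (by norm_num)]
  constructor <;> linarith [log_two_gt_d9, log_two_lt_d9, log_three_gt_d9, log_three_lt_d9]

lemma log_seven_mem : log 7 ∈ Icc 1.94591 1.94592 := by
  have hratio := log_mem_Icc_artanhSum (show (1 : ℝ) ≤ 7 / 8 * (4 / 3) by norm_num)
  have hlog7 : log (7 / 8 * (4 / 3)) = log 7 - log 2 - log 3 := by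
    rw [show (7 / 8 * (4 / 3) : ℝ) = 7 / 2 / 3 by norm_num, log_div (by norm_num) (by norm_num),
      log_div (by norm_num) (by norm_num)]
  rw [hlog7] at hratio
  norm_num [artanhSum, Finset.sum_range_succ] at hratio
  constructor <;> linarith [log_two_gt_d9, log_two_lt_d9, log_three_gt_d9, log_three_lt_d9]

lemma log_eight_mem : log 8 ∈ Icc 2.07944 2.07945 := by
  rw [show (8 : ℝ) = 2 ^ 3 by norm_num, log_pow]
  constructor <;> push_cast <;> linarith [log_two_gt_d9, log_two_lt_d9]

lemma log_nine_mem : log 9 ∈ Icc 2.19722 2.19723 := by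
  rw [show (9 : ℝ) = 3 ^ 2 by norm_num, log_pow]
  constructor <;> push_cast <;> linarith [log_three_gt_d9, log_three_lt_d9]

lemma weight_three_mem : weight 3 ∈ Icc 0.08388 0.084 := by
  have hl : log (log 3) ∈ Icc 0.09404 0.09406 := by
    apply log_log_mem_Icc log_three_mem <;> norm_num [artanhSum, Finset.sum_range_succ]
  exact Icc_subset_Icc (by norm_num) (by norm_num) (weight_mem_Icc (by norm_num) hl (by norm_num))

lemma weight_four_mem : weight 4 ∈ Icc 0.30653 0.30665 := by
  have hl : log (log 4) ∈ Icc 0.32663 0.32664 := by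
    apply log_log_mem_Icc log_four_mem <;> norm_num [artanhSum, Finset.sum_range_succ]
  exact Icc_subset_Icc (by norm_num) (by norm_num) (weight_mem_Icc (by norm_num) hl (by norm_num))

lemma weight_five_mem : weight 5 ∈ Icc 0.45702 0.45711 := by
  have hl : log (log 5) ∈ Icc 0.47587 0.47589 := by
    apply log_log_mem_Icc log_five_mem <;> norm_num [artanhSum, Finset.sum_range_succ]
  exact Icc_subset_Icc (by norm_num) (by norm_num) (weight_mem_Icc (by norm_num) hl (by norm_num))

lemma weight_six_mem : weight 6 ∈ Icc 0.5671 0.56715 := by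
  have hl : log (log 6) ∈ Icc 0.58319 0.5832 := by
    apply log_log_mem_Icc log_six_mem <;> norm_num [artanhSum, Finset.sum_range_succ]
  exact Icc_subset_Icc (by norm_num) (by norm_num) (weight_mem_Icc (by norm_num) hl (by norm_num))

lemma weight_seven_mem : weight 7 ∈ Icc 0.6522 0.65225 := by
  have hl : log (log 7) ∈ Icc 0.66572 0.66574 := by
    apply log_log_mem_Icc log_seven_mem <;> norm_num [artanhSum, Finset.sum_range_succ]
  exact Icc_subset_Icc (by norm_num) (by norm_num) (weight_mem_Icc (by norm_num) hl (by norm_num))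

lemma weight_eight_mem : weight 8 ∈ Icc 0.72069 0.72074 := by
  have hl : log (log 8) ∈ Icc 0.73209 0.73211 := by
    apply log_log_mem_Icc log_eight_mem <;> norm_num [artanhSum, Finset.sum_range_succ]
  exact Icc_subset_Icc (by norm_num) (by norm_num) (weight_mem_Icc (by norm_num) hl (by norm_num))

lemma weight_nine_mem : weight 9 ∈ Icc 0.7775 0.77753 := by
  have hl : log (log 9) ∈ Icc 0.78719 0.7872 := by
    apply log_log_mem_Icc log_nine_mem <;> norm_num [artanhSum, Finset.sum_range_succ]
  exact Icc_subset_Icc (by norm_num) (by norm_num) (weight_mem_Icc (by norm_num) hl (by norm_num))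

/-- Minus the derivative of `c ↦ base c i ^ i`: the rate at which the `i`-th term decreases in the
combined parameter `c = a + (-1)^i b`. -/
noncomputable def slope (c : ℝ) (i : ℕ) : ℝ := weight i * base c i ^ (i - 1)

lemma slope_anti {c d : ℝ} {i : ℕ} (hcd : c ≤ d) (hi : 3 ≤ i) (hd : 0 ≤ base d i) :
    slope d i ≤ slope c i := by
  have hx : (3 : ℝ) ≤ i := by exact_mod_cast hi
  have := weight_nonneg hx
  rw [slope, slope]
  gcongr
  exact base_anti hcd hx

lemma slope_mem_Icc {c p q r s : ℝ} {i : ℕ} (hc : 0 ≤ c) (hL : log i ∈ Icc p q)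
    (hm : weight i ∈ Icc r s) (hr : 0 ≤ r) (hB : 0 ≤ 1 - (q + c * s) / i) :
    slope c i ∈ Icc (r * (1 - (q + c * s) / i) ^ (i - 1))
      (s * (1 - (p + c * r) / i) ^ (i - 1)) := by
  have hbase := base_mem_Icc hc (Nat.cast_nonneg i) hL hm
  have hw : 0 ≤ weight i := hr.trans hm.1
  have hbase₀ : 0 ≤ base c i := hB.trans hbase.1
  have hs : 0 ≤ s := hw.trans hm.2
  exact ⟨mul_le_mul hm.1 (pow_le_pow_left₀ hB hbase.1 _) (by positivity) hw,
    mul_le_mul hm.2 (pow_le_pow_left₀ hbase₀ hbase.2 _) (by positivity) hs⟩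

-- The bounds of `alternating_slopes_nonneg` made homogeneous in `x = (c - 1) / 4` and
-- `y = (5 - c) / 4`: all coefficients of the resulting form are nonnegative.
lemma alternating_slopes_bound_nonneg {x y : ℝ} (hx : 0 ≤ x) (hy : 0 ≤ y) :
    0 ≤ 0.08388 * ((x + y) - (1.09862 * (x + y) + (5 * x + y) * 0.084) / 3) ^ 2 * (x + y) ^ 6
      - 0.30665 * ((x + y) - (1.38629 * (x + y) + (5 * x + y) * 0.30653) / 4) ^ 3 * (x + y) ^ 5
      + 0.45702 * ((x + y) - (1.60944 * (x + y) + (5 * x + y) * 0.45711) / 5) ^ 4 * (x + y) ^ 4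
      - 0.56715 * ((x + y) - (1.79175 * (x + y) + (5 * x + y) * 0.5671) / 6) ^ 5 * (x + y) ^ 3
      + 0.6522 * ((x + y) - (1.94592 * (x + y) + (5 * x + y) * 0.65225) / 7) ^ 6 * (x + y) ^ 2
      - 0.72074 * ((x + y) - (2.07944 * (x + y) + (5 * x + y) * 0.72069) / 8) ^ 7 * (x + y) ^ 1
      + 0.7775 / 2 * ((x + y) - (2.19723 * (x + y) + (5 * x + y) * 0.77753) / 9) ^ 8 := by
  ring_nf
  positivity

lemma alternating_slopes_nonneg {c : ℝ} (hc : c ∈ Icc 1 5) :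
    0 ≤ slope c 3 - slope c 4 + slope c 5 - slope c 6 + slope c 7 - slope c 8 + slope c 9 / 2 := by
  have hc₀ : 0 ≤ c := zero_le_one.trans hc.1
  obtain ⟨h1, h5⟩ := hc
  have h₃ := (slope_mem_Icc (i := 3) hc₀ log_three_mem weight_three_mem (by norm_num)
    (by norm_num; linarith)).1
  have h₄ := (slope_mem_Icc (i := 4) hc₀ log_four_mem weight_four_mem (by norm_num)
    (by norm_num; linarith)).2
  have h₅ := (slope_mem_Icc (i := 5) hc₀ log_five_mem weight_five_mem (by norm_num)
    (by norm_num; linarith)).1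
  have h₆ := (slope_mem_Icc (i := 6) hc₀ log_six_mem weight_six_mem (by norm_num)
    (by norm_num; linarith)).2
  have h₇ := (slope_mem_Icc (i := 7) hc₀ log_seven_mem weight_seven_mem (by norm_num)
    (by norm_num; linarith)).1
  have h₈ := (slope_mem_Icc (i := 8) hc₀ log_eight_mem weight_eight_mem (by norm_num)
    (by norm_num; linarith)).2
  have h₉ := (slope_mem_Icc (i := 9) hc₀ log_nine_mem weight_nine_mem (by norm_num)
    (by norm_num; linarith)).1
  have hbound := alternating_slopes_bound_nonneg (x := (c - 1) / 4) (y := (5 - c) / 4)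
    (by linarith) (by linarith)
  rw [show (c - 1) / 4 + (5 - c) / 4 = 1 by ring,
    show 5 * ((c - 1) / 4) + (5 - c) / 4 = c by ring] at hbound
  simp only [one_pow, mul_one] at hbound
  norm_num at h₃ h₄ h₅ h₆ h₇ h₈ h₉ hbound
  linarith

lemma base_nonneg {c : ℝ} (hc : c ∈ Icc 0 5) {i : ℕ} (hi : 3 ≤ i) : 0 ≤ base c i := by
  obtain ⟨hc₀, hc₅⟩ := hc
  obtain hi9 | hi9 := le_or_gt 9 i
  · exact (base_pos_of_nine_le hc₀ hc₅ (by exact_mod_cast hi9)).le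
  have hbase {x p q r s : ℝ} (hL : log x ∈ Icc p q) (hm : weight x ∈ Icc r s) (hx : 0 < x)
      (hs : 0 ≤ s) (h5 : q + 5 * s ≤ x) : 0 ≤ base c x := by
    refine le_trans ?_ (base_mem_Icc hc₀ hx.le hL hm).1
    rw [sub_nonneg, div_le_one hx]
    nlinarith
  interval_cases i
  · exact hbase log_three_mem weight_three_mem (by norm_num) (by norm_num) (by norm_num)
  · exact hbase log_four_mem weight_four_mem (by norm_num) (by norm_num) (by norm_num)
  · exact hbase log_five_mem weight_five_mem (by norm_num) (by norm_num) (by norm_num)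
  · exact hbase log_six_mem weight_six_mem (by norm_num) (by norm_num) (by norm_num)
  · exact hbase log_seven_mem weight_seven_mem (by norm_num) (by norm_num) (by norm_num)
  · exact hbase log_eight_mem weight_eight_mem (by norm_num) (by norm_num) (by norm_num)

lemma exp_logSlope {c : ℝ} (hc : c ∈ Icc 0 5) {i : ℕ} (hi : 9 ≤ i) :
    exp (logSlope c i) = slope c i := by
  have hx : (9 : ℝ) ≤ i := by exact_mod_cast hi
  have hm := three_quarters_le_weight hx
  have hB := base_pos_of_nine_le hc.1 hc.2 hx
  rw [logSlope, slope, exp_add, exp_log (by linarith), mul_comm (_ - 1), ← rpow_def_of_pos hB,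
    ← Nat.cast_pred (by omega), rpow_natCast]

lemma slope_succ_le {c : ℝ} (hc : c ∈ Icc 1 5) {i : ℕ} (hi : 9 ≤ i) :
    slope c (i + 1) ≤ (slope c i + slope c (i + 2)) / 2 := by
  have hc' : c ∈ Icc 0 5 := ⟨zero_le_one.trans hc.1, hc.2⟩
  have hx : (9 : ℝ) ≤ i := by exact_mod_cast hi
  have hhalf : (0 : ℝ) ≤ 1 / 2 := by norm_num
  have hmid := (convexOn_logSlope hc).2 (mem_Ici.2 hx)
    (mem_Ici.2 (show (9 : ℝ) ≤ (i + 2 : ℕ) by push_cast; linarith)) hhalf hhalf (by norm_num)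
  have hexp := convexOn_exp.2 (mem_univ (logSlope c i)) (mem_univ (logSlope c (i + 2 : ℕ)))
    hhalf hhalf (by norm_num)
  simp only [smul_eq_mul] at hmid hexp
  rw [show 1 / 2 * (i : ℝ) + 1 / 2 * (i + 2 : ℕ) = (i + 1 : ℕ) by push_cast; ring] at hmid
  rw [← exp_logSlope hc' hi, ← exp_logSlope hc' (by omega : 9 ≤ i + 1),
    ← exp_logSlope hc' (by omega : 9 ≤ i + 2)]
  linarith [exp_le_exp.2 hmid]

lemma sum_range_neg_one_pow_mul_slope (c : ℝ) (n : ℕ) :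
    ∑ j ∈ Finset.range (n + 6), (-1) ^ j * slope c (j + 3) =
      slope c 3 - slope c 4 + slope c 5 - slope c 6 + slope c 7 - slope c 8
        + ∑ j ∈ Finset.range n, (-1) ^ j * slope c (j + 9) := by
  have hshift (j : ℕ) :
      (-1) ^ (6 + j) * slope c (6 + j + 3) = (-1) ^ j * slope c (j + 9) := by
    rw [pow_add, show 6 + j + 3 = j + 9 by ring]
    norm_num
  rw [add_comm n, Finset.sum_range_add]
  simp only [hshift, Finset.sum_range_succ, Finset.sum_range_zero, Nat.reduceAdd]
  ring

lemma sum_range_neg_one_pow_mul_slope_nonneg {c : ℝ} (hc : c ∈ Icc 1 5) (k : ℕ) :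
    0 ≤ ∑ j ∈ Finset.range (2 * k + 7), (-1) ^ j * slope c (j + 3) := by
  have htail := half_add_le_sum_range_neg_one_pow_mul (g := fun j => slope c (j + 9))
    (fun n => by simpa only [add_right_comm n] using slope_succ_le hc (i := n + 9) (by omega)) k
  have hlast : 0 ≤ slope c (2 * k + 9) := by
    rw [← exp_logSlope ⟨zero_le_one.trans hc.1, hc.2⟩ (by omega)]
    exact (exp_pos _).le
  rw [sum_range_neg_one_pow_mul_slope c (2 * k + 1)]
  simp only [zero_add] at htail
  linarith [alternating_slopes_nonneg hc]

/-! ### Increments of the terms -/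

lemma exTerm_eq_base_pow (a b : ℝ) (i : ℕ) : exTerm a b i = base (a + (-1) ^ i * b) i ^ i := by
  rw [exTerm, base, weight]
  ring

lemma sub_mul_slope_le_base_pow_sub {c d : ℝ} {i : ℕ} (hi : i ≠ 0) (hc : 0 ≤ base c i)
    (hd : 0 ≤ base d i) : (c - d) * slope c i ≤ base d i ^ i - base c i ^ i := by
  obtain ⟨n, rfl⟩ := Nat.exists_eq_succ_of_ne_zero hi
  have htangent := pow_add_mul_sub_le_pow hc hd n
  have hchord : (n + 1) * (base d (n + 1 : ℕ) - base c (n + 1 : ℕ)) =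
      (c - d) * weight (n + 1 : ℕ) := by
    rw [base, base]
    push_cast
    field_simp
    ring
  have hslope : (c - d) * slope c (n + 1) =
      (n + 1) * base c (n + 1 : ℕ) ^ n * (base d (n + 1 : ℕ) - base c (n + 1 : ℕ)) := by
    rw [slope, Nat.add_sub_cancel]
    linear_combination -base c (n + 1 : ℕ) ^ n * hchord
  rw [Nat.succ_eq_add_one, hslope]
  linarith

section VaryingB

variable {a b₁ b₂ c : ℝ} {i : ℕ}

lemma neg_mul_slope_le_exTerm_sub_of_even (hi : 3 ≤ i) (heven : Even i) (hc : c ≤ a + b₁)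
    (hb : b₁ ≤ b₂) (h₁ : 0 ≤ base (a + b₁) i) (h₂ : 0 ≤ base (a + b₂) i) :
    -((b₂ - b₁) * slope c i) ≤ exTerm a b₂ i - exTerm a b₁ i := by
  simp only [exTerm_eq_base_pow, heven.neg_one_pow, one_mul]
  calc -((b₂ - b₁) * slope c i) ≤ -((b₂ - b₁) * slope (a + b₁) i) := by
        gcongr
        exact slope_anti hc hi h₁
    _ = (a + b₁ - (a + b₂)) * slope (a + b₁) i := by ring
    _ ≤ base (a + b₂) i ^ i - base (a + b₁) i ^ i :=
        sub_mul_slope_le_base_pow_sub (by omega) h₁ h₂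

lemma mul_slope_le_exTerm_sub_of_odd (hi : 3 ≤ i) (hodd : Odd i) (hc : a - b₁ ≤ c)
    (hb : b₁ ≤ b₂) (h : 0 ≤ base c i) :
    (b₂ - b₁) * slope c i ≤ exTerm a b₂ i - exTerm a b₁ i := by
  have hx : (3 : ℝ) ≤ i := by exact_mod_cast hi
  have h₁ : 0 ≤ base (a - b₁) i := h.trans (base_anti hc hx)
  have h₂ : 0 ≤ base (a - b₂) i := h₁.trans (base_anti (by linarith) hx)
  simp only [exTerm_eq_base_pow, hodd.neg_one_pow, neg_one_mul, ← sub_eq_add_neg]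
  calc (b₂ - b₁) * slope c i ≤ (b₂ - b₁) * slope (a - b₁) i := by
        gcongr
        exact slope_anti hc hi h
    _ = (a - b₁ - (a - b₂)) * slope (a - b₁) i := by ring
    _ ≤ base (a - b₂) i ^ i - base (a - b₁) i ^ i :=
        sub_mul_slope_le_base_pow_sub (by omega) h₁ h₂

lemma exTerm_le_exTerm_of_odd (hi : 3 ≤ i) (hodd : Odd i) (hb : b₁ ≤ b₂)
    (h₁ : 0 ≤ base (a - b₁) i) : exTerm a b₁ i ≤ exTerm a b₂ i := by
  simp only [exTerm_eq_base_pow, hodd.neg_one_pow, neg_one_mul, ← sub_eq_add_neg]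
  exact pow_le_pow_left₀ h₁ (base_anti (by linarith) (by exact_mod_cast hi)) i

end VaryingB

lemma exTerm_anti_left {a₁ a₂ b : ℝ} {i : ℕ} (hi : 3 ≤ i) (ha : a₁ ≤ a₂)
    (h : 0 ≤ base (a₂ + (-1) ^ i * b) i) : exTerm a₂ b i ≤ exTerm a₁ b i := by
  rw [exTerm_eq_base_pow, exTerm_eq_base_pow]
  exact pow_le_pow_left₀ h (base_anti (by linarith) (by exact_mod_cast hi)) i

/-! ### Decay of the slopes at `c = 5` -/

lemma base_five_le {x : ℝ} (hx : 10 ≤ x) :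
    base 5 x ≤ 1 - (log x + 4.95 * log (log x)) / x := by
  have hl := log_log_gt_of_nine_le (show 9 ≤ x by linarith)
  have hcos : 0.99 ≤ cos (1 / x) ^ 2 := by
    have : 1 / x ^ 2 ≤ 1 / 100 := by gcongr; nlinarith
    linarith [one_sub_inv_sq_le_cos_inv_sq x]
  have hweight : 0.99 * log (log x) ≤ weight x := by
    rw [weight]; nlinarith
  rw [base, sub_le_sub_iff_left, div_le_div_iff_of_pos_right (by linarith)]
  linarith

lemma slope_five_le {i : ℕ} (hi : 10 ≤ i) : slope 5 i ≤ 0.3873 / (i * log i ^ 4) := by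
  have hx : (10 : ℝ) ≤ i := by exact_mod_cast hi
  have hx' : (9 : ℝ) ≤ i := by linarith
  have hL := log_gt_of_nine_le hx'
  have hl := log_log_gt_of_nine_le hx'
  have hB := base_pos_of_nine_le (c := 5) (by norm_num) le_rfl hx'
  set l := log (log i) with hl_def
  set U := log i + 4.95 * l with hU_def
  have hBU : base 5 i ≤ 1 - U / i := base_five_le hx
  have hUi : U < i := (div_lt_one (by linarith)).1 (by linarith)
  have hpow : base 5 i ^ (i - 1) ≤ exp (-U) :=
    (pow_le_pow_left₀ hB.le hBU _).trans
      (one_sub_div_pow_pred_le_exp_neg (by omega) hUi (by nlinarith))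
  have hexp : exp (-U) = exp (-(0.95 * l)) / (i * log i ^ 4) := by
    rw [show -U = -(0.95 * l) - log i - (4 : ℕ) * l by rw [hU_def]; push_cast; ring, exp_sub,
      exp_sub, exp_log (by linarith), exp_nat_mul, hl_def, exp_log (by linarith), div_div]
  calc slope 5 i ≤ l * exp (-U) :=
        mul_le_mul (weight_le_log_log hx') hpow (by positivity) (by linarith)
    _ = l * exp (-(0.95 * l)) / (i * log i ^ 4) := by rw [hexp, mul_div_assoc]
    _ ≤ exp (-1) / 0.95 / (i * log i ^ 4) := by
        gcongr
        exact mul_exp_neg_mul_le (by norm_num) l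
    _ ≤ 0.3873 / (i * log i ^ 4) := by
        gcongr
        rw [div_le_iff₀ (by norm_num)]
        linarith [exp_neg_one_lt_d9]

lemma slope_five_le_telescope {i : ℕ} (hi : 10 ≤ i) :
    slope 5 i ≤ 0.06455 * (1 / log (i - 2) ^ 3 - 1 / log i ^ 3) := by
  have := one_div_mul_log_pow_four_le (x := i) (by exact_mod_cast (by omega : 3 < i))
  calc slope 5 i ≤ 0.3873 * (1 / (i * log i ^ 4)) := by
        rw [mul_one_div]; exact slope_five_le hi
    _ ≤ 0.06455 * (1 / log (i - 2) ^ 3 - 1 / log i ^ 3) := by linarith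

lemma div_log_pow_le_slope_three_sub : 0.06455 / log 8 ^ 3 ≤
    slope 7.43 3 - slope 5 4 - slope 5 6 - slope 5 8 := by
  have h₃ := (slope_mem_Icc (i := 3) (c := 7.43) (by norm_num) log_three_mem weight_three_mem
    (by norm_num) (by norm_num)).1
  have h₄ := (slope_mem_Icc (i := 4) (c := 5) (by norm_num) log_four_mem weight_four_mem
    (by norm_num) (by norm_num)).2
  have h₆ := (slope_mem_Icc (i := 6) (c := 5) (by norm_num) log_six_mem weight_six_mem
    (by norm_num) (by norm_num)).2
  have h₈ := (slope_mem_Icc (i := 8) (c := 5) (by norm_num) log_eight_mem weight_eight_mem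
    (by norm_num) (by norm_num)).2
  have hlog : 0.06455 / log 8 ^ 3 ≤ 0.06455 / 2.07944 ^ 3 := by
    gcongr
    exact log_eight_mem.1
  norm_num at h₃ h₄ h₆ h₈ hlog ⊢
  linarith

/-! ### Admissible parameters -/

/-- All bases of the series `S^{a,b}` are nonnegative. -/
def Admissible (a b : ℝ) : Prop := ∀ i : ℕ, 3 ≤ i → 0 ≤ base (a + (-1) ^ i * b) i

lemma le_of_base_six_nonneg {c : ℝ} (h : 0 ≤ base c 6) : c ≤ 7.43 := by
  have hL := log_six_mem.1
  have hm := weight_six_mem.1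
  rw [base, sub_nonneg, div_le_one (by norm_num)] at h
  by_contra! hc
  nlinarith

namespace Admissible

variable {a b b₁ b₂ : ℝ}

lemma base_add_nonneg (h : Admissible a b) {i : ℕ} (hi : 3 ≤ i) (heven : Even i) :
    0 ≤ base (a + b) i := by
  simpa only [heven.neg_one_pow, one_mul] using h i hi

lemma base_sub_nonneg (h : Admissible a b) {i : ℕ} (hi : 3 ≤ i) (hodd : Odd i) :
    0 ≤ base (a - b) i := by
  simpa only [hodd.neg_one_pow, neg_one_mul, ← sub_eq_add_neg] using h i hi

lemma add_le (h : Admissible a b) : a + b ≤ 7.43 :=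
  le_of_base_six_nonneg (by exact_mod_cast h.base_add_nonneg (i := 6) (by norm_num) (by decide))

lemma neg_mul_slope_le_exTerm_sub (h₁ : Admissible a b₁) (h₂ : Admissible a b₂) (hb : b₁ ≤ b₂)
    {c : ℝ} (hc : c ≤ a + b₁) {i : ℕ} (hi : 3 ≤ i) (heven : Even i) :
    -((b₂ - b₁) * slope c i) ≤ exTerm a b₂ i - exTerm a b₁ i :=
  neg_mul_slope_le_exTerm_sub_of_even hi heven hc hb (h₁.base_add_nonneg hi heven)
    (h₂.base_add_nonneg hi heven)

lemma exTerm_sub_nonneg_of_odd (h₁ : Admissible a b₁) (hb : b₁ ≤ b₂) {i : ℕ} (hi : 3 ≤ i)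
    (hodd : Odd i) : 0 ≤ exTerm a b₂ i - exTerm a b₁ i :=
  sub_nonneg.2 (exTerm_le_exTerm_of_odd hi hodd hb (h₁.base_sub_nonneg hi hodd))

lemma mul_div_log_pow_le_sum_seven (h₁ : Admissible a b₁) (h₂ : Admissible a b₂)
    (ha : 5 ≤ a) (hb₁ : 0 ≤ b₁) (hb : b₁ ≤ b₂) :
    (b₂ - b₁) * (0.06455 / log 8 ^ 3) ≤
      ∑ j ∈ Finset.range 7, (exTerm a b₂ (j + 3) - exTerm a b₁ (j + 3)) := by
  have hbase : 0 ≤ base 7.43 (3 : ℕ) := by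
    refine le_trans ?_ (base_mem_Icc (by norm_num) (by norm_num) log_three_mem weight_three_mem).1
    norm_num
  have hthree := mul_slope_le_exTerm_sub_of_odd (a := a) (b₁ := b₁) (le_refl 3) (by decide)
    (by linarith [h₁.add_le]) hb hbase
  have heven {i : ℕ} := h₁.neg_mul_slope_le_exTerm_sub h₂ hb (c := 5) (by linarith) (i := i)
  have hodd {i : ℕ} := h₁.exTerm_sub_nonneg_of_odd hb (i := i)
  calc (b₂ - b₁) * (0.06455 / log 8 ^ 3)
      ≤ (b₂ - b₁) * (slope 7.43 3 - slope 5 4 - slope 5 6 - slope 5 8) :=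
        mul_le_mul_of_nonneg_left div_log_pow_le_slope_three_sub (sub_nonneg.2 hb)
    _ = (b₂ - b₁) * slope 7.43 3 + -((b₂ - b₁) * slope 5 4) + 0 + -((b₂ - b₁) * slope 5 6) + 0
          + -((b₂ - b₁) * slope 5 8) + 0 := by ring
    _ ≤ _ := by
        simp only [Finset.sum_range_succ, Finset.sum_range_zero, zero_add, Nat.reduceAdd]
        gcongr ?_ + ?_ + ?_ + ?_ + ?_ + ?_ + ?_
        exacts [heven (by decide) (by decide), hodd (by decide) (by decide),
          heven (by decide) (by decide), hodd (by decide) (by decide),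
          heven (by decide) (by decide), hodd (by decide) (by decide)]

lemma mul_div_log_pow_le_sum (h₁ : Admissible a b₁) (h₂ : Admissible a b₂)
    (ha : 5 ≤ a) (hb₁ : 0 ≤ b₁) (hb : b₁ ≤ b₂) (k : ℕ) :
    (b₂ - b₁) * (0.06455 / log (2 * k + 8 : ℕ) ^ 3) ≤
      ∑ j ∈ Finset.range (2 * k + 7), (exTerm a b₂ (j + 3) - exTerm a b₁ (j + 3)) := by
  induction k with
  | zero => exact_mod_cast mul_div_log_pow_le_sum_seven h₁ h₂ ha hb₁ hb
  | succ k ih =>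
    have heven := h₁.neg_mul_slope_le_exTerm_sub h₂ hb (c := 5) (by linarith)
      (show 3 ≤ 2 * k + 7 + 3 by omega) ⟨k + 5, by ring⟩
    have hodd := h₁.exTerm_sub_nonneg_of_odd hb (show 3 ≤ 2 * k + 7 + 1 + 3 by omega)
      ⟨k + 5, by ring⟩
    have hslope := mul_le_mul_of_nonneg_left
      (slope_five_le_telescope (show 10 ≤ 2 * k + 7 + 3 by omega)) (sub_nonneg.2 hb)
    rw [show ((2 * k + 7 + 3 : ℕ) : ℝ) - 2 = (2 * k + 8 : ℕ) by push_cast; ring] at hslope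
    rw [mul_add_one, show 2 * k + 2 + 7 = 2 * k + 7 + 1 + 1 by ring, Finset.sum_range_succ,
      Finset.sum_range_succ]
    linear_combination ih + heven + hodd + hslope

lemma sum_exTerm_sub_nonneg (h₁ : Admissible a b₁) (h₂ : Admissible a b₂)
    (ha : 1 ≤ a) (hb₁ : 0 ≤ b₁) (hb : b₁ ≤ b₂) (k : ℕ) :
    0 ≤ ∑ j ∈ Finset.range (2 * k + 7), (exTerm a b₂ (j + 3) - exTerm a b₁ (j + 3)) := by
  have hδ : 0 ≤ b₂ - b₁ := sub_nonneg.2 hb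
  obtain ha₅ | ha₅ := le_total 5 a
  · have : 0 ≤ log (2 * k + 8 : ℕ) := log_natCast_nonneg _
    refine le_trans ?_ (h₁.mul_div_log_pow_le_sum h₂ ha₅ hb₁ hb k)
    positivity
  · calc 0 ≤ (b₂ - b₁) * ∑ j ∈ Finset.range (2 * k + 7), (-1) ^ j * slope a (j + 3) :=
          mul_nonneg hδ (sum_range_neg_one_pow_mul_slope_nonneg ⟨ha, ha₅⟩ k)
      _ = ∑ j ∈ Finset.range (2 * k + 7), (b₂ - b₁) * ((-1) ^ j * slope a (j + 3)) :=
          Finset.mul_sum _ _ _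
      _ ≤ _ := Finset.sum_le_sum fun j _ => ?_
    obtain hj | hj := j.even_or_odd
    · rw [hj.neg_one_pow, one_mul]
      exact mul_slope_le_exTerm_sub_of_odd (by omega) (by exact hj.add_odd (by decide))
        (by linarith) hb (base_nonneg ⟨zero_le_one.trans ha, ha₅⟩ (by omega))
    · rw [hj.neg_one_pow, neg_one_mul, mul_neg]
      exact h₁.neg_mul_slope_le_exTerm_sub h₂ hb (by linarith) (by omega)
        (hj.add_odd (by decide))

end Admissible

/-! ### Convergence forces `1 ≤ a` -/

lemma eventually_sq_log_add_log_log_le :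
    ∀ᶠ x : ℝ in atTop, (log x + log (log x)) ^ 2 + (log x + log (log x)) ≤ x := by
  have hlog := (isLittleO_pow_log_id_atTop (n := 2)).bound (show (0 : ℝ) < 1 / 6 by norm_num)
  filter_upwards [hlog, eventually_ge_atTop 9] with x hx hx₉
  have hL := log_gt_of_nine_le hx₉
  have hl := log_log_gt_of_nine_le hx₉
  have hl' : log (log x) ≤ log x := log_le_self (by linarith)
  rw [id, norm_of_nonneg (by positivity), norm_of_nonneg (by linarith)] at hx
  nlinarith

lemma eventually_exp_neg_one_div_le_base_one_pow :
    ∀ᶠ i : ℕ in atTop, exp (-1) * (1 / (i * log i)) ≤ base 1 i ^ i := by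
  filter_upwards [tendsto_natCast_atTop_atTop.eventually eventually_sq_log_add_log_log_le,
    eventually_ge_atTop 9] with i hi hi₉
  have hi₉' : (9 : ℝ) ≤ i := by exact_mod_cast hi₉
  have hL := log_gt_of_nine_le hi₉'
  have := log_log_gt_of_nine_le hi₉'
  have hU : log i + log (log i) < i := by nlinarith
  calc exp (-1) * (1 / (i * log i)) = exp (-(log i + log (log i)) - 1) := by
        rw [sub_eq_add_neg, exp_add, exp_neg (log i + _), exp_add, exp_log (by linarith),
          exp_log (by linarith), mul_comm, one_div]
    _ ≤ (1 - (log i + log (log i)) / i) ^ i :=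
        exp_neg_sub_one_le_one_sub_div_pow (by omega) hi
    _ ≤ base 1 i ^ i := by
        have : 0 ≤ 1 - (log i + log (log i)) / i :=
          sub_nonneg.2 ((div_le_one (by linarith)).2 hU.le)
        rw [base, one_mul]
        gcongr
        exact weight_le_log_log hi₉'

lemma one_le_of_summable_exTerm {a b : ℝ} (hb : 0 ≤ b)
    (h : Summable fun j => exTerm a b (j + 3)) : 1 ≤ a := by
  by_contra! ha
  have hodd : Summable fun n : ℕ => exTerm a b (2 * n + 3) :=
    h.comp_injective (mul_right_injective₀ two_ne_zero)
  refine not_summable_one_div_odd_mul_log ((summable_mul_left_iff (exp_pos (-1)).ne').1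
    (hodd.of_norm_bounded_eventually_nat ?_))
  have htop : Tendsto (fun n : ℕ => 2 * n + 3) atTop atTop :=
    tendsto_atTop_mono (fun n => by simp only [id]; omega) tendsto_id
  filter_upwards [htop.eventually eventually_exp_neg_one_div_le_base_one_pow] with n hn
  rw [norm_of_nonneg (mul_nonneg (exp_pos _).le
    (one_div_nonneg.2 (mul_nonneg (Nat.cast_nonneg _) (log_natCast_nonneg _)))),
    exTerm_eq_base_pow, (show Odd (2 * n + 3) from ⟨n + 1, by ring⟩).neg_one_pow]
  refine hn.trans (pow_le_pow_left₀ (base_nonneg (by norm_num) (by omega))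
    (base_anti (by linarith) ?_) _)
  exact_mod_cast show 3 ≤ 2 * n + 3 by omega

namespace Admissible

variable {a b : ℝ}

lemma exTerm_nonneg (h : Admissible a b) {i : ℕ} (hi : 3 ≤ i) : 0 ≤ exTerm a b i := by
  rw [exTerm_eq_base_pow]
  exact pow_nonneg (h i hi) i

lemma hasSum (h : Admissible a b) {M : ℝ}
    (hM : Tendsto (fun N => ∑ i ∈ Finset.Icc 3 N, exTerm a b i) atTop (nhds M)) :
    HasSum (fun j => exTerm a b (j + 3)) M := by
  rw [hasSum_iff_tendsto_nat_of_nonneg fun j => h.exTerm_nonneg (by omega)]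
  simpa only [Function.comp_def, sum_Icc_three_eq_sum_range] using hM.comp (tendsto_add_atTop_nat 2)

lemma of_base_nonneg
    (h : ∀ i : ℕ, 3 ≤ i →
      0 ≤ 1 - log i / i - (log (log i) / i) * (cos (1 / i)) ^ 2 * (a + (-1 : ℝ) ^ i * b)) :
    Admissible a b := fun i hi => (h i hi).trans_eq (by rw [base, weight]; ring)

lemma hasSum_anti_left {a₁ a₂ L₁ L₂ : ℝ} (h : Admissible a₂ b) (ha : a₁ ≤ a₂)
    (hL₁ : HasSum (fun j => exTerm a₁ b (j + 3)) L₁)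
    (hL₂ : HasSum (fun j => exTerm a₂ b (j + 3)) L₂) : L₂ ≤ L₁ :=
  hasSum_le (fun j => exTerm_anti_left (by omega) ha (h _ (by omega))) hL₂ hL₁

lemma hasSum_mono_right {b₁ b₂ M₁ M₂ : ℝ} (h₁ : Admissible a b₁) (h₂ : Admissible a b₂)
    (hb₁ : 0 ≤ b₁) (hb : b₁ ≤ b₂) (hM₁ : HasSum (fun j => exTerm a b₁ (j + 3)) M₁)
    (hM₂ : HasSum (fun j => exTerm a b₂ (j + 3)) M₂) : M₁ ≤ M₂ := by
  have ha : 1 ≤ a := one_le_of_summable_exTerm hb₁ hM₁.summable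
  have htop : Tendsto (fun k : ℕ => 2 * k + 7) atTop atTop :=
    tendsto_atTop_mono (fun k => by simp only [id]; omega) tendsto_id
  exact sub_nonneg.1 (ge_of_tendsto' ((hM₂.sub hM₁).tendsto_sum_nat.comp htop)
    (h₁.sum_exTerm_sub_nonneg h₂ ha hb₁ hb))

end Admissible

end exTerm

/-- if the bases are nonnegative and the series `S^{a,b}`
converges (to the indicated limits of partial sums) for each pair considered,
then `S^{a,b}` is nonincreasing in `a` and nondecreasing in `b`. -/
theorem exSeries_anti_a_mono_b
    (a b a₁ a₂ b₁ b₂ : ℝ)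
    (ha : 0 ≤ a) (hb : 0 ≤ b)
    (ha₁ : 0 ≤ a₁) (ha₂ : 0 ≤ a₂) (hb₁ : 0 ≤ b₁) (hb₂ : 0 ≤ b₂)
    (hbase₁ : ∀ i : ℕ, 3 ≤ i →
      0 ≤ 1 - Real.log i / i -
        (Real.log (Real.log i) / i) * (Real.cos (1 / i)) ^ 2 * (a₁ + (-1 : ℝ) ^ i * b))
    (hbase₂ : ∀ i : ℕ, 3 ≤ i →
      0 ≤ 1 - Real.log i / i -
        (Real.log (Real.log i) / i) * (Real.cos (1 / i)) ^ 2 * (a₂ + (-1 : ℝ) ^ i * b))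
    (hbase₃ : ∀ i : ℕ, 3 ≤ i →
      0 ≤ 1 - Real.log i / i -
        (Real.log (Real.log i) / i) * (Real.cos (1 / i)) ^ 2 * (a + (-1 : ℝ) ^ i * b₁))
    (hbase₄ : ∀ i : ℕ, 3 ≤ i →
      0 ≤ 1 - Real.log i / i -
        (Real.log (Real.log i) / i) * (Real.cos (1 / i)) ^ 2 * (a + (-1 : ℝ) ^ i * b₂))
    (L₁ L₂ M₁ M₂ : ℝ)
    (hL₁ : Tendsto (fun N : ℕ => ∑ i ∈ Finset.Icc 3 N, exTerm a₁ b i) atTop (nhds L₁))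
    (hL₂ : Tendsto (fun N : ℕ => ∑ i ∈ Finset.Icc 3 N, exTerm a₂ b i) atTop (nhds L₂))
    (hM₁ : Tendsto (fun N : ℕ => ∑ i ∈ Finset.Icc 3 N, exTerm a b₁ i) atTop (nhds M₁))
    (hM₂ : Tendsto (fun N : ℕ => ∑ i ∈ Finset.Icc 3 N, exTerm a b₂ i) atTop (nhds M₂)) :
    (a₁ ≤ a₂ → L₂ ≤ L₁) ∧ (b₁ ≤ b₂ → M₁ ≤ M₂) := by
  have h₁ := exTerm.Admissible.of_base_nonneg hbase₁
  have h₂ := exTerm.Admissible.of_base_nonneg hbase₂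
  have h₃ := exTerm.Admissible.of_base_nonneg hbase₃
  have h₄ := exTerm.Admissible.of_base_nonneg hbase₄
  exact ⟨fun ha => h₂.hasSum_anti_left ha (h₁.hasSum hL₁) (h₂.hasSum hL₂),
    fun hb => h₃.hasSum_mono_right h₄ hb₁ hb (h₃.hasSum hM₁) (h₄.hasSum hM₂)⟩
end

section
/- For a real parameter a, consider the series S^a = ∑_{i=2}^∞ (1 − log i/i − a·(log log i)/i)^i. Then S^a converges if a > 1 and diverges if a ≤ 1. -/
open Filter

/-!
The summand is `(1 - y i / i) ^ i` with `y i = log i + a * log (log i)`. As `y i ^ 2 / i → 0`, it is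
asymptotically equivalent to `exp (-y i) = 1 / (i * (log i) ^ a)`, so the series converges exactly
when the Bertrand series of exponent `a` does.
-/

open Asymptotics
open scoped Topology

theorem exists_tendsto_sum_Icc_iff {E : Type*} [AddCommGroup E] [TopologicalSpace E]
    [IsTopologicalAddGroup E] (f : ℕ → E) (m : ℕ) :
    (∃ l, Tendsto (fun N ↦ ∑ i ∈ Finset.Icc m N, f i) atTop (𝓝 l)) ↔
      ∃ l, Tendsto (fun N ↦ ∑ i ∈ Finset.range N, f i) atTop (𝓝 l) := by
  set S : ℕ → E := fun N ↦ ∑ i ∈ Finset.range N, f i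
  have sum_Icc : (fun N ↦ ∑ i ∈ Finset.Icc m N, f i) =ᶠ[atTop] fun N ↦ S (N + 1) - S m := by
    filter_upwards [eventually_ge_atTop m] with N hN
    rw [← Finset.Ico_add_one_right_eq_Icc, Finset.sum_Ico_eq_sub f (by lia)]
  have shift (l : E) : Tendsto (fun N ↦ S (N + 1)) atTop (𝓝 l) ↔ Tendsto S atTop (𝓝 l) :=
    tendsto_add_atTop_iff_nat 1
  constructor
  · rintro ⟨l, hl⟩
    refine ⟨l + S m, (shift _).1 ?_⟩
    simpa only [sub_add_cancel] using (hl.congr' sum_Icc).add_const (S m)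
  · rintro ⟨l, hl⟩
    exact ⟨l - S m, (((shift l).2 hl).sub_const (S m)).congr' sum_Icc.symm⟩

theorem exists_tendsto_sum_range_iff_summable {f : ℕ → ℝ} (hf : ∀ᶠ n in atTop, 0 ≤ f n) :
    (∃ l, Tendsto (fun N ↦ ∑ i ∈ Finset.range N, f i) atTop (𝓝 l)) ↔ Summable f := by
  refine ⟨fun ⟨l, hl⟩ ↦ ?_, fun h ↦ ⟨_, h.hasSum.tendsto_sum_nat⟩⟩
  obtain ⟨K, hK⟩ := eventually_atTop.1 hf
  have tail_tendsto : Tendsto (fun N ↦ ∑ i ∈ Finset.range N, f (i + K)) atTop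
      (𝓝 (l - ∑ i ∈ Finset.range K, f i)) := by
    refine (((tendsto_add_atTop_iff_nat K).2 hl).sub_const _).congr fun N ↦ ?_
    rw [add_comm N K, Finset.sum_range_add, add_sub_cancel_left]
    simp only [add_comm K]
  have tail_nonneg (n : ℕ) : 0 ≤ f (n + K) := hK _ (Nat.le_add_left K n)
  exact (summable_nat_add_iff K).1
    ((hasSum_iff_tendsto_nat_of_nonneg tail_nonneg _).2 tail_tendsto).summable

theorem exists_tendsto_sum_Icc_iff_summable {f : ℕ → ℝ} (hf : ∀ᶠ n in atTop, 0 ≤ f n) (m : ℕ) :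
    (∃ l, Tendsto (fun N ↦ ∑ i ∈ Finset.Icc m N, f i) atTop (𝓝 l)) ↔ Summable f :=
  (exists_tendsto_sum_Icc_iff f m).trans (exists_tendsto_sum_range_iff_summable hf)

theorem inv_natCast_mul_log_rpow_nonneg (p : ℝ) (n : ℕ) : 0 ≤ ((n : ℝ) * Real.log n ^ p)⁻¹ :=
  inv_nonneg.2 (mul_nonneg n.cast_nonneg (Real.rpow_nonneg (Real.log_natCast_nonneg n) p))

theorem inv_natCast_mul_log_rpow_succ_le {p : ℝ} (hp : 0 ≤ p) {n : ℕ} (hn : 2 ≤ n) :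
    (((n + 1 : ℕ) : ℝ) * Real.log (n + 1 : ℕ) ^ p)⁻¹ ≤ ((n : ℝ) * Real.log n ^ p)⁻¹ := by
  have log_pos : 0 < Real.log n := Real.log_pos (by exact_mod_cast hn)
  gcongr <;> exact n.le_succ

theorem summable_inv_natCast_mul_log_rpow_iff_of_nonneg {p : ℝ} (hp : 0 ≤ p) :
    Summable (fun n : ℕ ↦ ((n : ℝ) * Real.log n ^ p)⁻¹) ↔ 1 < p := by
  have log_two_pos : 0 < Real.log 2 := Real.log_pos one_lt_two
  have condensed (k : ℕ) : (2 : ℝ) ^ k * (((2 ^ k : ℕ) : ℝ) * Real.log (2 ^ k : ℕ) ^ p)⁻¹ =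
      (Real.log 2 ^ p)⁻¹ * ((k : ℝ) ^ p)⁻¹ := by
    rw [Nat.cast_pow, Nat.cast_ofNat, Real.log_pow, Real.mul_rpow k.cast_nonneg log_two_pos.le]
    field_simp
  rw [← summable_condensed_iff_of_eventually_nonneg
    (Eventually.of_forall (inv_natCast_mul_log_rpow_nonneg p))
    ((eventually_ge_atTop 2).mono fun _ ↦ inv_natCast_mul_log_rpow_succ_le hp)]
  simp only [condensed]
  rw [summable_mul_left_iff (by positivity), Real.summable_nat_rpow_inv]

theorem summable_inv_natCast_mul_log_rpow_iff {p : ℝ} :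
    Summable (fun n : ℕ ↦ ((n : ℝ) * Real.log n ^ p)⁻¹) ↔ 1 < p := by
  rcases le_or_gt 0 p with hp | hp
  · exact summable_inv_natCast_mul_log_rpow_iff_of_nonneg hp
  refine iff_of_false (fun h ↦ Real.not_summable_natCast_inv ?_) (by linarith)
  refine h.of_norm_bounded_eventually_nat ?_
  have one_le_log : ∀ᶠ n : ℕ in atTop, 1 ≤ Real.log n :=
    (Real.tendsto_log_atTop.comp tendsto_natCast_atTop_atTop).eventually_ge_atTop 1
  filter_upwards [one_le_log, eventually_gt_atTop 0] with n hlog hn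
  have n_pos : (0 : ℝ) < n := Nat.cast_pos.2 hn
  have log_rpow_le_one : Real.log n ^ p ≤ 1 := Real.rpow_le_one_of_one_le_of_nonpos hlog hp.le
  rw [norm_inv, Real.norm_natCast]
  gcongr
  exact mul_le_of_le_one_right n_pos.le log_rpow_le_one

theorem one_add_pow_le_exp_mul {x : ℝ} (hx : -1 ≤ x) (k : ℕ) : (1 + x) ^ k ≤ Real.exp (k * x) := by
  rw [Real.exp_nat_mul, add_comm]
  gcongr
  · linarith
  · exact Real.add_one_le_exp x

/-- Bernoulli's inequality applied to `1 - x ^ 2 ≤ (1 + x) * exp (-x)`. -/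
theorem one_sub_mul_sq_mul_exp_le_one_add_pow {x : ℝ} (hx : |x| ≤ 1) (k : ℕ) :
    (1 - k * x ^ 2) * Real.exp (k * x) ≤ (1 + x) ^ k := by
  have sq_le_one : x ^ 2 ≤ 1 := (sq_le_one_iff_abs_le_one x).2 hx
  have base_le : (1 - x ^ 2) * Real.exp x ≤ 1 + x :=
    calc (1 - x ^ 2) * Real.exp x = (1 + x) * (1 - x) * Real.exp x := by ring
      _ ≤ (1 + x) * Real.exp (-x) * Real.exp x := by
        gcongr
        · linarith [neg_le_of_abs_le hx]
        · exact Real.one_sub_le_exp_neg x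
      _ = 1 + x := by rw [mul_assoc, ← Real.exp_add, neg_add_cancel, Real.exp_zero, mul_one]
  calc (1 - k * x ^ 2) * Real.exp (k * x)
      = (1 + k * (-x ^ 2)) * Real.exp x ^ k := by rw [Real.exp_nat_mul]; ring
    _ ≤ (1 + -x ^ 2) ^ k * Real.exp x ^ k := by
      gcongr
      exact one_add_mul_le_pow (by linarith) k
    _ = ((1 - x ^ 2) * Real.exp x) ^ k := by rw [← sub_eq_add_neg, mul_pow]
    _ ≤ (1 + x) ^ k :=
      pow_le_pow_left₀ (mul_nonneg (sub_nonneg.2 sq_le_one) (Real.exp_pos x).le) base_le k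

theorem abs_one_add_pow_sub_exp_le {x : ℝ} {k : ℕ} (h : k * x ^ 2 ≤ 1) :
    |(1 + x) ^ k - Real.exp (k * x)| ≤ k * x ^ 2 * Real.exp (k * x) := by
  rcases Nat.eq_zero_or_pos k with rfl | hk
  · simp
  have one_le_k : (1 : ℝ) ≤ k := Nat.one_le_cast.2 hk
  have abs_le_one : |x| ≤ 1 :=
    (sq_le_one_iff_abs_le_one x).1 ((le_mul_of_one_le_left (sq_nonneg x) one_le_k).trans h)
  have upper := one_add_pow_le_exp_mul (neg_le_of_abs_le abs_le_one) k
  have lower := one_sub_mul_sq_mul_exp_le_one_add_pow abs_le_one k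
  rw [abs_of_nonpos (sub_nonpos.2 upper)]
  linarith

theorem isEquivalent_one_add_pow_exp_mul {ι : Type*} {l : Filter ι} {x : ι → ℝ} {k : ι → ℕ}
    (h : Tendsto (fun i ↦ k i * x i ^ 2) l (𝓝 0)) :
    (fun i ↦ (1 + x i) ^ k i) ~[l] fun i ↦ Real.exp (k i * x i) := by
  have bound : (fun i ↦ (1 + x i) ^ k i - Real.exp (k i * x i)) =O[l]
      fun i ↦ k i * x i ^ 2 * Real.exp (k i * x i) := by
    refine .of_bound' ((h.eventually_le_const one_pos).mono fun i hi ↦ ?_)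
    exact (abs_one_add_pow_sub_exp_le hi).trans (le_abs_self _)
  have small : (fun i ↦ k i * x i ^ 2 * Real.exp (k i * x i)) =o[l]
      fun i ↦ Real.exp (k i * x i) := by
    simpa only [one_mul] using ((isLittleO_one_iff ℝ).2 h).mul_isBigO (isBigO_refl _ l)
  exact bound.trans_isLittleO small

theorem isEquivalent_one_sub_div_pow_exp_neg {y : ℕ → ℝ}
    (hy : (fun n ↦ y n ^ 2) =o[atTop] fun n ↦ (n : ℝ)) :
    (fun n ↦ (1 - y n / n) ^ n) ~[atTop] fun n ↦ Real.exp (-y n) := by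
  have sq_tendsto : Tendsto (fun n : ℕ ↦ n * (-(y n / n)) ^ 2) atTop (𝓝 0) := by
    refine hy.tendsto_div_nhds_zero.congr fun n ↦ ?_
    rcases eq_or_ne (n : ℝ) 0 with hn | hn
    · simp [hn]
    · field_simp
  refine (isEquivalent_one_add_pow_exp_mul sq_tendsto).congr_right ?_ |>.congr_left ?_
  · filter_upwards [eventually_ne_atTop 0] with n hn
    rw [mul_neg, mul_div_cancel₀ _ (Nat.cast_ne_zero.2 hn)]
  · exact .of_forall fun n ↦ by simp only [← sub_eq_add_neg]

theorem isBigO_log_add_mul_log_log (a : ℝ) :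
    (fun x ↦ Real.log x + a * Real.log (Real.log x)) =O[atTop] Real.log := by
  have log_log : (fun x ↦ Real.log (Real.log x)) =o[atTop] Real.log :=
    Real.isLittleO_log_id_atTop.comp_tendsto Real.tendsto_log_atTop
  exact (isBigO_refl _ _).add (log_log.isBigO.const_mul_left a)

theorem isLittleO_sq_log_add_mul_log_log (a : ℝ) :
    (fun x ↦ (Real.log x + a * Real.log (Real.log x)) ^ 2) =o[atTop] fun x ↦ x :=
  ((isBigO_log_add_mul_log_log a).pow 2).trans_isLittleO Real.isLittleO_pow_log_id_atTop

theorem exp_neg_log_add_mul_log_log {x : ℝ} (hx : 1 < x) (a : ℝ) :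
    Real.exp (-(Real.log x + a * Real.log (Real.log x))) = (x * Real.log x ^ a)⁻¹ := by
  rw [Real.exp_neg, Real.exp_add, Real.exp_log (zero_lt_one.trans hx),
    Real.rpow_def_of_pos (Real.log_pos hx), mul_comm a]

theorem isEquivalent_one_sub_log_div_sub_log_log_div_pow (a : ℝ) :
    (fun i : ℕ ↦ (1 - Real.log i / i - a * Real.log (Real.log i) / i) ^ i) ~[atTop]
      fun i : ℕ ↦ ((i : ℝ) * Real.log i ^ a)⁻¹ := by
  have sq_small := (isLittleO_sq_log_add_mul_log_log a).comp_tendsto tendsto_natCast_atTop_atTop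
  refine (isEquivalent_one_sub_div_pow_exp_neg sq_small).congr_right ?_ |>.congr_left ?_
  · filter_upwards [eventually_gt_atTop 1] with i hi
    exact exp_neg_log_add_mul_log_log (Nat.one_lt_cast.2 hi) a
  · exact .of_forall fun i ↦ by simp only [add_div, sub_sub]

/-- the series `S^a = ∑_{i=2}^∞ (1 - log i / i - a log log i / i)^i`
converges if `a > 1` and diverges if `a ≤ 1`. -/
theorem example2_series_convergence (a : ℝ) :
    (1 < a → ∃ l : ℝ,
      Tendsto (fun N : ℕ => ∑ i ∈ Finset.Icc 2 N,
        (1 - Real.log i / i - a * Real.log (Real.log i) / i) ^ i) atTop (nhds l)) ∧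
    (a ≤ 1 → ¬ ∃ l : ℝ,
      Tendsto (fun N : ℕ => ∑ i ∈ Finset.Icc 2 N,
        (1 - Real.log i / i - a * Real.log (Real.log i) / i) ^ i) atTop (nhds l)) := by
  have equiv := isEquivalent_one_sub_log_div_sub_log_log_div_pow a
  have eventually_nonneg :=
    equiv.eventually_nonneg (.of_forall (inv_natCast_mul_log_rpow_nonneg a))
  rw [exists_tendsto_sum_Icc_iff_summable eventually_nonneg, equiv.summable_iff_nat,
    summable_inv_natCast_mul_log_rpow_iff]
  exact ⟨id, not_lt_of_ge⟩
end

section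
/- Consider for a ∈ ℝ and b ≥ 1 the series S^{a,b} = ∑_{i=1}^∞ |sin(aπi)|^i / i^b. (i) For every a ∈ ℝ, the series converges if b > 1. (ii) If b = 1 and a = ℓ/(2m) where ℓ and m are odd positive integers, then the series diverges. -/
open Filter

/-! Each numerator lies in `[0, 1]`, so for `b > 1` the series is dominated by `∑ 1 / i^b`. If
`a = ℓ / (2m)` with `ℓ` odd, then at every odd multiple `i = m(2k+1)` of `m` the angle `aπi` is an
odd multiple of `π/2` and the numerator is `1`. These indices form a residue class modulo `2m`, over
which the harmonic series already diverges. -/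

lemma exists_tendsto_sum_Icc_one_iff_summable {f : ℕ → ℝ} (hf : ∀ i, 0 ≤ f i) :
    (∃ l, Tendsto (fun N : ℕ => ∑ i ∈ Finset.Icc 1 N, f i) atTop (nhds l)) ↔ Summable f := by
  have sum_Icc_one (N : ℕ) : ∑ i ∈ Finset.Icc 1 N, f i = ∑ i ∈ Finset.range N, f (i + 1) := by
    rw [← Finset.Ico_add_one_right_eq_Icc, Finset.sum_Ico_eq_sum_range, Nat.add_sub_cancel]
    simp only [add_comm 1]
  simp only [sum_Icc_one, ← hasSum_iff_tendsto_nat_of_nonneg fun i => hf (i + 1)]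
  exact summable_nat_add_iff 1

lemma summable_div_rpow_of_abs_le {c : ℕ → ℝ} {C b : ℝ} (hc : ∀ i, |c i| ≤ C) (hb : 1 < b) :
    Summable fun i : ℕ => c i / (i : ℝ) ^ b := by
  refine ((Real.summable_nat_rpow_inv.mpr hb).mul_left C).of_norm_bounded fun i => ?_
  have hi : 0 ≤ (i : ℝ) ^ b := by positivity
  rw [Real.norm_eq_abs, abs_div, abs_of_nonneg hi, div_eq_mul_inv]
  gcongr
  exact hc i

lemma not_summable_div_rpow_of_one_le_on_residueClass {c : ℕ → ℝ} {q : ℕ} {b : ℝ} (hq : q ≠ 0)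
    (r : ZMod q) (hc : ∀ i, 0 ≤ c i) (hc_one : ∀ i : ℕ, (i : ZMod q) = r → 1 ≤ c i) (hb : b ≤ 1) :
    ¬ Summable fun i : ℕ => c i / (i : ℝ) ^ b := by
  have term_nonneg (i : ℕ) : 0 ≤ c i / (i : ℝ) ^ b := div_nonneg (hc i) (by positivity)
  refine fun h => Real.not_summable_indicator_one_div_natCast hq r <|
    h.of_nonneg_of_le (Set.indicator_nonneg fun i _ => by positivity) fun i => ?_
  refine Set.indicator_le' (fun (i : ℕ) (hir : (i : ZMod q) = r) => ?_) (fun i _ => term_nonneg i) i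
  rcases i.eq_zero_or_pos with rfl | hi
  · simpa using term_nonneg 0
  · have hi_one : (1 : ℝ) ≤ i := by exact_mod_cast hi
    exact div_le_div₀ (hc i) (hc_one i hir) (by positivity) (Real.rpow_le_self_of_one_le hi_one hb)

lemma abs_sin_odd_mul_pi_div_two {n : ℤ} (hn : Odd n) : |Real.sin (n * (Real.pi / 2))| = 1 := by
  obtain ⟨k, rfl⟩ := hn
  rw [← Real.cos_sub_pi_div_two, Real.abs_cos_eq_one_iff]
  exact ⟨k, by push_cast; ring⟩

lemma abs_sin_eq_one_of_natCast_eq {ℓ m : ℤ} (hℓ : Odd ℓ) (hm : m ≠ 0) {i : ℕ}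
    (hi : (i : ZMod (2 * m.natAbs)) = m) :
    |Real.sin ((ℓ : ℝ) / (2 * m) * Real.pi * i)| = 1 := by
  obtain ⟨k, hk⟩ : 2 * m ∣ (i : ℤ) - m := by
    rw [← Int.natAbs_dvd, Int.natAbs_mul]
    exact (ZMod.intCast_eq_intCast_iff_dvd_sub _ _ _).mp (by exact_mod_cast hi.symm)
  have hik : (i : ℝ) = m * (2 * k + 1) := by
    exact_mod_cast (by linear_combination hk : (i : ℤ) = m * (2 * k + 1))
  have hm' : (m : ℝ) ≠ 0 := by exact_mod_cast hm
  have angle_eq : (ℓ : ℝ) / (2 * m) * Real.pi * i =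
      (ℓ * (2 * k + 1) : ℤ) * (Real.pi / 2) := by
    rw [hik]
    push_cast
    field_simp
  rw [angle_eq]
  exact abs_sin_odd_mul_pi_div_two (hℓ.mul (odd_two_mul_add_one k))

theorem example7_series_convergence_general :
    (∀ a b : ℝ, 1 < b → ∃ l : ℝ,
      Tendsto (fun N : ℕ => ∑ i ∈ Finset.Icc 1 N,
        |Real.sin (a * Real.pi * i)| ^ i / (i : ℝ) ^ b) atTop (nhds l)) ∧
    (∀ (ℓ m : ℤ) (b : ℝ), Odd ℓ → m ≠ 0 → b ≤ 1 →
      ¬ ∃ l : ℝ,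
        Tendsto (fun N : ℕ => ∑ i ∈ Finset.Icc 1 N,
          |Real.sin (((ℓ : ℝ) / (2 * (m : ℝ))) * Real.pi * i)| ^ i / (i : ℝ) ^ b)
          atTop (nhds l)) := by
  refine ⟨fun a b hb => ?_, fun ℓ m b hℓ hm hb => ?_⟩
  · rw [exists_tendsto_sum_Icc_one_iff_summable fun i => by positivity]
    refine summable_div_rpow_of_abs_le (C := 1) (fun i => ?_) hb
    rw [abs_pow, abs_abs]
    exact pow_le_one₀ (abs_nonneg _) (Real.abs_sin_le_one _)
  · rw [exists_tendsto_sum_Icc_one_iff_summable fun i => by positivity]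
    have hq : 2 * m.natAbs ≠ 0 := by simpa using hm
    refine not_summable_div_rpow_of_one_le_on_residueClass hq m (fun i => by positivity)
      (fun i hi => ?_) hb
    rw [abs_sin_eq_one_of_natCast_eq hℓ hm hi, one_pow]

/-- for the series `S^{a,b} = ∑_{i=1}^∞ |sin(aπi)|^i / i^b`:
(i) for every real `a`, the series converges whenever `b > 1`;
(ii) if `b = 1` and `a = ℓ/(2m)` with `ℓ, m` odd positive integers,
the series diverges. -/
theorem example7_series_convergence :
    (∀ a b : ℝ, 1 < b → ∃ l : ℝ,
      Tendsto (fun N : ℕ => ∑ i ∈ Finset.Icc 1 N,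
        |Real.sin (a * Real.pi * i)| ^ i / (i : ℝ) ^ b) atTop (nhds l)) ∧
    (∀ ℓ m : ℕ, Odd ℓ → Odd m → 0 < ℓ → 0 < m →
      ¬ ∃ l : ℝ,
        Tendsto (fun N : ℕ => ∑ i ∈ Finset.Icc 1 N,
          |Real.sin (((ℓ : ℝ) / (2 * (m : ℝ))) * Real.pi * i)| ^ i / (i : ℝ) ^ (1 : ℝ))
          atTop (nhds l)) := by
  refine ⟨example7_series_convergence_general.1, fun ℓ m hℓ _ _ hm => ?_⟩
  simpa only [Int.cast_natCast] using example7_series_convergence_general.2 ℓ m 1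
    (by exact_mod_cast hℓ) (by omega) le_rfl
end
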